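/- arXiv:2409.07142 — 2 statements merged into one kernel-verified Lean document; each statement's English description precedes it below -/
import Mathlib

section
/- Fix n ≥ 1 and δ ∈ [0, 1/2]. Consider the randomized learning-augmented mechanism f for n agents on the line that, given reports x ∈ ℝⁿ (with x_L = minᵢ xᵢ, x_R = maxᵢ xᵢ, M = (x_L+x_R)/2) and a prediction F* ∈ ℝ of the optimal facility location, outputs: with probability δ/2 the point x_L, with probability δ/2 the point x_R, with probability δ the point M, and with probability 1−2δ the point F* clamped to the interval [x_L, x_R] (i.e., x_L if F* < x_L, x_R if F* > x_R, and F* otherwise). Then f is truthful in expectation, (1+δ)-consistent, and (2−δ)-robust. -/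
open MeasureTheory

/-- The randomized learning-augmented mechanism for `n` agents on the line: given
reports `x` (with `x_L = min_i x_i`, `x_R = max_i x_i`, `M = (x_L+x_R)/2`) and a
prediction `F` of the optimal facility location, it outputs `x_L` with probability
`δ/2`, `x_R` with probability `δ/2`, `M` with probability `δ`, and `F` clamped to
`[x_L, x_R]` with probability `1 - 2δ`. -/
noncomputable def lineMech (n : ℕ) (δ : ℝ) (x : Fin n → ℝ) (F : ℝ) : Measure ℝ :=
  let xL := ⨅ i, x i
  let xR := ⨆ i, x i
  let M := (xL + xR) / 2
  ENNReal.ofReal (δ / 2) • Measure.dirac xL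
    + ENNReal.ofReal (δ / 2) • Measure.dirac xR
    + ENNReal.ofReal δ • Measure.dirac M
    + ENNReal.ofReal (1 - 2 * δ) • Measure.dirac (max xL (min xR F))

/-!
Write `L` and `R` for the extreme reports. An agent at `a ∈ [L, R]` who misreports can only push
away an extreme at which it does not sit, so no misreport brings an extreme closer to `a`.

The lottery over `L`, `R` and the midpoint costs the agent `δ / 2` times `|u| + |v| + |u + v|`,
where `u = L - a ≤ 0 ≤ v = R - a`. Under these signs this equals `2 * max |u| |v|`, which is always
a lower bound, so pushing the extremes away does not help. As for the clamped prediction, whenever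
it lies to the right (left) of `a`, the misreport keeps it there and moves it weakly further away.

The egalitarian cost is `R - L` at both extremes, half of that at the midpoint, and at most `R - L`
at the clamped prediction. Hence the expected cost is `3δ/2 * (R - L)` plus `1 - 2δ` times the cost
of the clamped prediction, which gives both approximation bounds.
-/

open Function

section Extremes

variable {ι α : Type*} [Finite ι] [ConditionallyCompleteLinearOrder α] {x : ι → α} {i : ι}

theorem iInf_update_le_of_iInf_lt [DecidableEq ι] (hi : ⨅ j, x j < x i) (t : α) :
    ⨅ j, update x i t j ≤ ⨅ j, x j := by
  have : Nonempty ι := ⟨i⟩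
  obtain ⟨k, hk⟩ := exists_eq_ciInf_of_finite (f := x)
  have hki : k ≠ i := by
    rintro rfl
    exact hi.ne' hk
  calc ⨅ j, update x i t j ≤ update x i t k := Finite.ciInf_le _ k
    _ = ⨅ j, x j := by rw [update_of_ne hki, hk]

theorem iSup_le_iSup_update_of_lt_iSup [DecidableEq ι] (hi : x i < ⨆ j, x j) (t : α) :
    ⨆ j, x j ≤ ⨆ j, update x i t j :=
  iInf_update_le_of_iInf_lt (α := αᵒᵈ) hi t

theorem iInf_le_iSup_of_finite [Nonempty ι] (x : ι → α) : ⨅ j, x j ≤ ⨆ j, x j :=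
  ciInf_le_ciSup (Set.finite_range x).bddBelow (Set.finite_range x).bddAbove

end Extremes

section Clamp

variable {α : Type*} [LinearOrder α] {a L R L' R' F : α}

theorem clamp_le_clamp_of_lt (hL : L ≤ a) (hR : a < R → R ≤ R') (h : a < max L (min R F)) :
    max L (min R F) ≤ max L' (min R' F) := by
  have ha : a < min R F := (lt_max_iff.1 h).resolve_left hL.not_gt
  have hRR' : R ≤ R' := hR (ha.trans_le (min_le_left R F))
  calc max L (min R F) = min R F := max_eq_right (hL.trans ha.le)
    _ ≤ min R' F := min_le_min_right F hRR'
    _ ≤ max L' (min R' F) := le_max_right _ _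

theorem clamp_le_clamp_of_gt (hR : a ≤ R) (hL : L < a → L' ≤ L) (h : max L (min R F) < a) :
    max L' (min R' F) ≤ max L (min R F) := by
  obtain ⟨hLa, ha⟩ := max_lt_iff.1 h
  have hFR : F ≤ R := ((min_lt_iff.1 ha).resolve_left hR.not_gt).le.trans hR
  calc max L' (min R' F) ≤ max L F := max_le_max (hL hLa) (min_le_right R' F)
    _ = max L (min R F) := by rw [min_eq_right hFR]

theorem abs_clamp_sub_le_abs_clamp_sub [AddCommGroup α] [IsOrderedAddMonoid α] (hLa : L ≤ a)
    (haR : a ≤ R) (hL : L < a → L' ≤ L) (hR : a < R → R ≤ R') (F : α) :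
    |max L (min R F) - a| ≤ |max L' (min R' F) - a| := by
  rcases lt_trichotomy a (max L (min R F)) with h | h | h
  · have hmono := clamp_le_clamp_of_lt (L' := L') hLa hR h
    exact abs_le_abs_of_nonneg (sub_nonneg.2 h.le) (sub_le_sub_right hmono a)
  · simp [← h]
  · have hmono := clamp_le_clamp_of_gt (R' := R') haR hL h
    exact abs_le_abs_of_nonpos (sub_nonpos.2 h.le) (sub_le_sub_right hmono a)

end Clamp

section AbsAdd

variable {A : Type*} [CommRing A] [LinearOrder A] [IsStrictOrderedRing A]

theorem two_mul_max_abs_le_abs_add_abs_add_abs_add (u v : A) :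
    2 * max |u| |v| ≤ |u| + |v| + |u + v| := by
  have hu : |u| ≤ |u + v| + |v| := by simpa using abs_sub (u + v) v
  have hv : |v| ≤ |u + v| + |u| := by simpa using abs_sub (u + v) u
  rcases max_choice |u| |v| with h | h <;> rw [h] <;> linarith

theorem abs_add_abs_add_abs_add_eq_two_mul_max {u v : A} (hu : u ≤ 0) (hv : 0 ≤ v) :
    |u| + |v| + |u + v| = 2 * max |u| |v| := by
  rw [abs_of_nonpos hu, abs_of_nonneg hv]
  rcases le_total 0 (u + v) with h | h
  · rw [abs_of_nonneg h, max_eq_right (by linarith)]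
    ring
  · rw [abs_of_nonpos h, max_eq_left (by linarith)]
    ring

end AbsAdd

section Lottery

variable {K : Type*} [Field K] [LinearOrder K] [IsStrictOrderedRing K] {a L R L' R' : K}

theorem abs_sub_extremes_add_midpoint_le (hLa : L ≤ a) (haR : a ≤ R) (hL : L < a → L' ≤ L)
    (hR : a < R → R ≤ R') :
    |L - a| + |R - a| + 2 * |(L + R) / 2 - a| ≤
      |L' - a| + |R' - a| + 2 * |(L' + R') / 2 - a| := by
  have two_mul_abs_midpoint_sub (p q : K) : 2 * |(p + q) / 2 - a| = |(p - a) + (q - a)| := by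
    rw [← abs_two, ← abs_mul, abs_two]
    ring_nf
  have hleft : |L - a| ≤ |L' - a| := by
    rcases hLa.eq_or_lt with rfl | h
    · simp
    · exact abs_le_abs_of_nonpos (sub_nonpos.2 hLa) (sub_le_sub_right (hL h) a)
  have hright : |R - a| ≤ |R' - a| := by
    rcases haR.eq_or_lt with rfl | h
    · simp
    · exact abs_le_abs_of_nonneg (sub_nonneg.2 haR) (sub_le_sub_right (hR h) a)
  rw [two_mul_abs_midpoint_sub, two_mul_abs_midpoint_sub]
  calc |L - a| + |R - a| + |(L - a) + (R - a)| = 2 * max |L - a| |R - a| :=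
        abs_add_abs_add_abs_add_eq_two_mul_max (sub_nonpos.2 hLa) (sub_nonneg.2 haR)
    _ ≤ 2 * max |L' - a| |R' - a| := by gcongr
    _ ≤ |L' - a| + |R' - a| + |(L' - a) + (R' - a)| :=
        two_mul_max_abs_le_abs_add_abs_add_abs_add _ _

end Lottery

section Cost

variable {ι : Type*} [Finite ι] [Nonempty ι]

theorem iSup_abs_sub_eq_max (x : ι → ℝ) (y : ℝ) :
    ⨆ i, |y - x i| = max (y - ⨅ i, x i) ((⨆ i, x i) - y) := by
  apply le_antisymm
  · refine ciSup_le fun i => abs_sub_le_iff.2 ⟨?_, ?_⟩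
    · exact le_max_of_le_left (sub_le_sub_left (Finite.ciInf_le x i) y)
    · exact le_max_of_le_right (sub_le_sub_right (Finite.le_ciSup x i) y)
  · obtain ⟨l, hl⟩ := exists_eq_ciInf_of_finite (f := x)
    obtain ⟨r, hr⟩ := exists_eq_ciSup_of_finite (f := x)
    rw [← hl, ← hr]
    refine max_le ?_ ?_
    · exact (le_abs_self _).trans (Finite.le_ciSup (fun i => |y - x i|) l)
    · exact (neg_sub y (x r) ▸ neg_le_abs _).trans (Finite.le_ciSup (fun i => |y - x i|) r)

theorem iSup_abs_midpoint_sub (x : ι → ℝ) :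
    ⨆ i, |((⨅ j, x j) + ⨆ j, x j) / 2 - x i| = ((⨆ i, x i) - ⨅ i, x i) / 2 := by
  rw [iSup_abs_sub_eq_max, max_eq_left (by linarith)]
  ring

theorem iSup_abs_sub_le_of_mem_Icc {x : ι → ℝ} {y : ℝ}
    (hy : y ∈ Set.Icc (⨅ i, x i) (⨆ i, x i)) :
    ⨆ i, |y - x i| ≤ (⨆ i, x i) - ⨅ i, x i := by
  rw [iSup_abs_sub_eq_max]
  exact max_le (sub_le_sub_right hy.2 _) (sub_le_sub_left hy.1 _)

end Cost

section Mechanism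

variable {n : ℕ} {δ : ℝ}

theorem integral_lineMech (hδ : δ ∈ Set.Icc (0 : ℝ) (1 / 2)) (x : Fin n → ℝ) (F : ℝ)
    (f : ℝ → ℝ) :
    ∫ y, f y ∂(lineMech n δ x F) =
      δ / 2 * f (⨅ i, x i) + δ / 2 * f (⨆ i, x i) + δ * f (((⨅ i, x i) + ⨆ i, x i) / 2)
        + (1 - 2 * δ) * f (max (⨅ i, x i) (min (⨆ i, x i) F)) := by
  obtain ⟨hδ₀, hδ₁⟩ := hδ
  have hf (c a : ℝ) : Integrable f (ENNReal.ofReal c • Measure.dirac a) :=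
    (integrable_dirac enorm_lt_top).smul_measure ENNReal.ofReal_ne_top
  rw [lineMech,
    integral_add_measure (((hf _ _).add_measure (hf _ _)).add_measure (hf _ _)) (hf _ _),
    integral_add_measure ((hf _ _).add_measure (hf _ _)) (hf _ _),
    integral_add_measure (hf _ _) (hf _ _)]
  simp only [integral_smul_measure, integral_dirac, smul_eq_mul]
  rw [ENNReal.toReal_ofReal (by linarith), ENNReal.toReal_ofReal hδ₀,
    ENNReal.toReal_ofReal (by linarith)]

theorem integral_abs_sub_lineMech_le_update (hδ : δ ∈ Set.Icc (0 : ℝ) (1 / 2)) (F : ℝ)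
    (x : Fin n → ℝ) (i : Fin n) (x' : ℝ) :
    ∫ y, |y - x i| ∂(lineMech n δ x F) ≤ ∫ y, |y - x i| ∂(lineMech n δ (update x i x') F) := by
  have hLi := Finite.ciInf_le x i
  have hiR := Finite.le_ciSup x i
  have hL (h : ⨅ j, x j < x i) := iInf_update_le_of_iInf_lt h x'
  have hR (h : x i < ⨆ j, x j) := iSup_le_iSup_update_of_lt_iSup h x'
  have hlottery := mul_le_mul_of_nonneg_left
    (abs_sub_extremes_add_midpoint_le hLi hiR hL hR) (show 0 ≤ δ / 2 by linarith [hδ.1])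
  have hclamp := mul_le_mul_of_nonneg_left
    (abs_clamp_sub_le_abs_clamp_sub hLi hiR hL hR F) (show 0 ≤ 1 - 2 * δ by linarith [hδ.2])
  rw [integral_lineMech hδ, integral_lineMech hδ]
  linarith

theorem integral_iSup_abs_sub_lineMech [NeZero n] (hδ : δ ∈ Set.Icc (0 : ℝ) (1 / 2))
    (x : Fin n → ℝ) (F : ℝ) :
    ∫ y, (⨆ i, |y - x i|) ∂(lineMech n δ x F) =
      3 * δ / 2 * ((⨆ i, x i) - ⨅ i, x i)
        + (1 - 2 * δ) * ⨆ i, |max (⨅ i, x i) (min (⨆ i, x i) F) - x i| := by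
  have hLR := iInf_le_iSup_of_finite x
  have cost_left : ⨆ i, |(⨅ j, x j) - x i| = (⨆ i, x i) - ⨅ i, x i := by
    rw [iSup_abs_sub_eq_max, max_eq_right (by linarith)]
  have cost_right : ⨆ i, |(⨆ j, x j) - x i| = (⨆ i, x i) - ⨅ i, x i := by
    rw [iSup_abs_sub_eq_max, max_eq_left (by linarith)]
  rw [integral_lineMech hδ, cost_left, cost_right, iSup_abs_midpoint_sub]
  ring

theorem integral_iSup_abs_sub_lineMech_midpoint [NeZero n] (hδ : δ ∈ Set.Icc (0 : ℝ) (1 / 2))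
    (x : Fin n → ℝ) :
    ∫ y, (⨆ i, |y - x i|) ∂(lineMech n δ x (((⨅ i, x i) + ⨆ i, x i) / 2)) =
      (1 + δ) * (((⨆ i, x i) - ⨅ i, x i) / 2) := by
  have hLR := iInf_le_iSup_of_finite x
  rw [integral_iSup_abs_sub_lineMech hδ, min_eq_right (by linarith), max_eq_right (by linarith),
    iSup_abs_midpoint_sub]
  ring

theorem integral_iSup_abs_sub_lineMech_le [NeZero n] (hδ : δ ∈ Set.Icc (0 : ℝ) (1 / 2))
    (x : Fin n → ℝ) (F : ℝ) :
    ∫ y, (⨆ i, |y - x i|) ∂(lineMech n δ x F) ≤ (2 - δ) * (((⨆ i, x i) - ⨅ i, x i) / 2) := by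
  have hclamp : max (⨅ i, x i) (min (⨆ i, x i) F) ∈ Set.Icc (⨅ i, x i) (⨆ i, x i) :=
    ⟨le_max_left _ _, max_le (iInf_le_iSup_of_finite x) (min_le_left _ _)⟩
  have hcost := mul_le_mul_of_nonneg_left (iSup_abs_sub_le_of_mem_Icc hclamp)
    (show 0 ≤ 1 - 2 * δ by linarith [hδ.2])
  rw [integral_iSup_abs_sub_lineMech hδ]
  linarith

end Mechanism

/-- for every `n ≥ 1` and `δ ∈ [0, 1/2]`, the mechanism `lineMech n δ` is
truthful in expectation, `(1+δ)`-consistent, and `(2-δ)`-robust for the egalitarian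
social cost. -/
theorem stmt5 (n : ℕ) (hn : 1 ≤ n) (δ : ℝ) (hδ : δ ∈ Set.Icc (0 : ℝ) (1 / 2)) :
    -- truthful in expectation (for every fixed prediction)
    (∀ (F : ℝ) (x : Fin n → ℝ) (i : Fin n) (x' : ℝ),
      ∫ y, |y - x i| ∂(lineMech n δ x F)
        ≤ ∫ y, |y - x i| ∂(lineMech n δ (Function.update x i x') F)) ∧
    -- (1+δ)-consistency: the prediction equals the optimal facility location
    (∀ x : Fin n → ℝ,
      ∫ y, (⨆ i, |y - x i|) ∂(lineMech n δ x (((⨅ i, x i) + ⨆ i, x i) / 2))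
        ≤ (1 + δ) * (((⨆ i, x i) - ⨅ i, x i) / 2)) ∧
    -- (2-δ)-robustness: for every prediction
    (∀ (x : Fin n → ℝ) (F : ℝ),
      ∫ y, (⨆ i, |y - x i|) ∂(lineMech n δ x F)
        ≤ (2 - δ) * (((⨆ i, x i) - ⨅ i, x i) / 2)) := by
  have : NeZero n := ⟨Nat.one_le_iff_ne_zero.1 hn⟩
  exact ⟨integral_abs_sub_lineMech_le_update hδ,
    fun x => (integral_iSup_abs_sub_lineMech_midpoint hδ x).le,
    integral_iSup_abs_sub_lineMech_le hδ⟩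
end

section
/- Let f be a deterministic learning-augmented mechanism for five agents in the Euclidean plane that receives a profile x ∈ (ℝ²)⁵ together with a prediction x̂ ∈ (ℝ²)⁵ of all five agents' locations, and such that for every fixed prediction x̂, the map x ↦ f(x, x̂) is truthful, anonymous (invariant under permutations of the five reports), and unanimous (if all five reports coincide at a point z, the output is z). Then for every δ > 0, f is not both (2−δ)-consistent and (1+√2−δ)-robust: either there exists a profile x with opt(x) > 0 such that the egalitarian social cost of f(x,x) on x is at least 2·opt(x), or there exist a profile x with opt(x) > 0 and a prediction x̂ such that the egalitarian social cost of f(x,x̂) on x is at least (1+√2)·opt(x). -/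
/-!
Fix as prediction the profile in which all agents but one stand at `p` and the last one at `q`. If
the output is `p`, its cost `dist p q` is twice the optimum. Otherwise we look at coalitions: if `j`
agents report `x` and all others report `y`, the mechanism becomes a truthful unanimous two-agent
rule, and we let `K j v` be the set of displacements `k` such that these `j` agents can report
`v + k`, with all others at `v`, and leave the output at `v`. In a plane this is the normal cone of
the outcomes the coalition can enforce against `v`; it shrinks as `j` grows, and a direction that
lies in `K j` on an open set makes a nonnegative inner product with every element of the cone of the
complementary coalition.

Let there be `2 * m + 1` agents. An output other than `p` puts a unit vector `e` into `K (2 * m)` on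
an open set. If moreover a unit vector orthogonal to `e` lies in `K m` on an open subset, the two
directions constrain the cones of a coalition of `m + 1` agents and of a single agent. If not, then
`K m` lies in a fixed open cone around `e`, and a single agent far away in direction `e` cannot
disturb two coalitions of `m` agents; comparing their reports shows that consecutive displacements
in `K m` never form an obtuse angle, which confines `K m` to a quadrant on an open set.

In both cases there are orthonormal `a`, `b` and two disjoint coalitions whose cones lie in the
half-planes `0 ≤ ⟪·, a⟫` and `0 ≤ ⟪·, b⟫` near some `c`. Placing them at `c - r • a` and
`c - r • b` pushes the output beyond both points, and an agent at `c + (r / √2) • (a + b)` on the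
same circle is then at distance at least `(1 + √2) * r` from it.
-/

open Filter Topology
open Multiset (card replicate)
open scoped RealInnerProductSpace

lemma eq_of_norm_sq_sub_nonpos {V : Type*} [NormedAddCommGroup V] {u v : V}
    (h : ‖u - v‖ ^ 2 ≤ 0) : u = v :=
  sub_eq_zero.mp (norm_eq_zero.mp (pow_eq_zero_iff two_ne_zero |>.mp (h.antisymm (sq_nonneg _))))

section InnerProductSpace

variable {V : Type*} [NormedAddCommGroup V] [InnerProductSpace ℝ V]

lemma dist_le_dist_iff_inner_le {u x y : V} :
    dist u x ≤ dist y x ↔ 2 * ⟪x - u, y - u⟫ ≤ ‖y - u‖ ^ 2 := by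
  have hy : ‖y - x‖ ^ 2 = ‖x - u‖ ^ 2 - 2 * ⟪x - u, y - u⟫ + ‖y - u‖ ^ 2 := by
    rw [← norm_sub_sq_real, ← norm_neg (y - x)]
    congr 2
    abel
  rw [dist_eq_norm, dist_eq_norm, norm_sub_rev u, ← sq_le_sq₀ (norm_nonneg _) (norm_nonneg _), hy]
  constructor <;> intro h <;> linarith

lemma dist_le_dist_iff_le_inner {u x y : V} :
    dist y x ≤ dist u x ↔ ‖y - u‖ ^ 2 ≤ 2 * ⟪x - u, y - u⟫ := by
  have hx : ⟪x - y, u - y⟫ = ‖y - u‖ ^ 2 - ⟪x - u, y - u⟫ := by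
    rw [← sub_sub_sub_cancel_right x y u, ← neg_sub y u, inner_neg_right, inner_sub_left,
      real_inner_self_eq_norm_sq]
    ring
  rw [dist_le_dist_iff_inner_le, hx, norm_sub_rev u]
  constructor <;> intro h <;> linarith

lemma eq_of_dist_add_smul_le {c e u v : V} {ρ η : ℝ} (hη : 0 < η) (hv : dist v c ≤ ρ)
    (hvu : η * ‖v - u‖ ≤ ⟪v - u, e⟫)
    (hle : dist u (c + (ρ / η) • e) ≤ dist v (c + (ρ / η) • e)) : u = v := by
  have hρ : 0 ≤ ρ := dist_nonneg.trans hv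
  rw [dist_le_dist_iff_le_inner] at hle
  refine eq_of_norm_sq_sub_nonpos (hle.trans ?_)
  have hinner : ⟪c + (ρ / η) • e - v, u - v⟫ = ⟪c - v, u - v⟫ - ρ / η * ⟪v - u, e⟫ := by
    rw [add_sub_right_comm, inner_add_left, real_inner_smul_left, real_inner_comm (u - v) e,
      ← inner_neg_neg (v - u), neg_sub, inner_neg_right, mul_neg, sub_neg_eq_add]
  have hcs : ⟪c - v, u - v⟫ ≤ ρ * ‖v - u‖ := by
    refine (real_inner_le_norm _ _).trans ?_
    rw [norm_sub_rev u, ← dist_eq_norm, dist_comm]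
    gcongr
  have hscale : ρ * ‖v - u‖ ≤ ρ / η * ⟪v - u, e⟫ := by
    rw [div_mul_eq_mul_div, le_div_iff₀ hη, mul_assoc, mul_comm _ η]
    gcongr
  linarith

lemma inner_nonpos_of_eventually_norm_le {d p : V}
    (h : ∀ᶠ t in 𝓝[>] (0 : ℝ), ‖d‖ ≤ ‖d - t • p‖) : ⟪d, p⟫ ≤ 0 := by
  have hlim : Tendsto (fun t : ℝ => t * ‖p‖ ^ 2) (𝓝[>] 0) (𝓝 0) :=
    Tendsto.mono_left (Continuous.tendsto' (by fun_prop) _ _ (zero_mul _)) nhdsWithin_le_nhds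
  have hbound : ∀ᶠ t in 𝓝[>] (0 : ℝ), 2 * ⟪d, p⟫ ≤ t * ‖p‖ ^ 2 := by
    filter_upwards [h, self_mem_nhdsWithin] with t hle (ht : 0 < t)
    have hsq : ‖d‖ ^ 2 ≤ ‖d - t • p‖ ^ 2 := pow_le_pow_left₀ (norm_nonneg _) hle 2
    rw [norm_sub_sq_real, real_inner_smul_right, norm_smul, Real.norm_of_nonneg ht.le] at hsq
    refine le_of_mul_le_mul_left ?_ ht
    linarith
  linarith [ge_of_tendsto hlim hbound]

lemma tendsto_sub_smul (u e : V) : Tendsto (fun t : ℝ => u - t • e) (𝓝[>] 0) (𝓝 u) :=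
  Tendsto.mono_left (Continuous.tendsto' (by fun_prop) _ _ (by simp)) nhdsWithin_le_nhds

/-- A pair of orthonormal vectors; in a plane it serves as a coordinate frame. -/
structure OrthonormalPair (e n : V) : Prop where
  norm_left : ‖e‖ = 1
  norm_right : ‖n‖ = 1
  inner_eq_zero : ⟪e, n⟫ = 0

namespace OrthonormalPair

variable {e n : V}

lemma symm (o : OrthonormalPair e n) : OrthonormalPair n e :=
  ⟨o.norm_right, o.norm_left, by rw [real_inner_comm, o.inner_eq_zero]⟩

lemma neg_right (o : OrthonormalPair e n) : OrthonormalPair e (-n) :=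
  ⟨o.norm_left, by rw [norm_neg, o.norm_right], by rw [inner_neg_right, o.inner_eq_zero, neg_zero]⟩

lemma of_inner_eq_zero {x y : V} (hx : x ≠ 0) (hy : y ≠ 0) (hxy : ⟪x, y⟫ = 0) :
    OrthonormalPair (‖x‖⁻¹ • x) (‖y‖⁻¹ • y) :=
  ⟨norm_smul_inv_norm (𝕜 := ℝ) hx, norm_smul_inv_norm (𝕜 := ℝ) hy, by
    rw [real_inner_smul_left, real_inner_smul_right, hxy, mul_zero, mul_zero]⟩

lemma inner_self_left (o : OrthonormalPair e n) : ⟪e, e⟫ = 1 := by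
  rw [real_inner_self_eq_norm_sq, o.norm_left, one_pow]

lemma inner_self_right (o : OrthonormalPair e n) : ⟪n, n⟫ = 1 := o.symm.inner_self_left

lemma orthonormal (o : OrthonormalPair e n) : Orthonormal ℝ ![e, n] := by
  simp [orthonormal_vecCons_iff, o.norm_left, o.norm_right, o.inner_eq_zero]

lemma norm_add (o : OrthonormalPair e n) : ‖e + n‖ = √2 := by
  rw [← Real.sqrt_sq (norm_nonneg _), norm_add_sq_real, o.norm_left, o.norm_right, o.inner_eq_zero]
  norm_num

lemma dist_add_smul_add (o : OrthonormalPair e n) (c : V) {r : ℝ} (hr : 0 ≤ r) :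
    dist c (c + (r / √2) • (e + n)) = r := by
  rw [dist_self_add_right, norm_smul, o.norm_add, Real.norm_of_nonneg (by positivity),
    div_mul_cancel₀ _ (by positivity)]

lemma mul_le_dist_add_smul_add (o : OrthonormalPair e n) {c v : V} {r : ℝ} (hr : 0 ≤ r)
    (hv : dist v c < 4 * r → 0 ≤ ⟪c - r • e - v, e⟫ ∧ 0 ≤ ⟪c - r • n - v, n⟫) :
    (1 + √2) * r ≤ dist v (c + (r / √2) • (e + n)) := by
  have hsqrt : √2 * √2 = 2 := Real.mul_self_sqrt zero_le_two
  set z := c + (r / √2) • (e + n) with hz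
  rcases lt_or_ge (dist v c) (4 * r) with hnear | hfar
  · obtain ⟨he, hn⟩ := hv hnear
    have hinner : ⟪z - v, e + n⟫ = ⟪c - r • e - v, e⟫ + ⟪c - r • n - v, n⟫ + 2 * r + r * √2 := by
      have hdiv : r / √2 * 2 = r * √2 := by
        rw [div_mul_eq_mul_div, div_eq_iff (by positivity), mul_assoc, hsqrt]
      rw [← hdiv, hz]
      simp only [inner_sub_left, inner_add_left, inner_add_right, real_inner_smul_left,
        o.inner_self_left, o.inner_self_right, o.inner_eq_zero, o.symm.inner_eq_zero]
      ring
    refine le_of_mul_le_mul_right (?_ : _ ≤ dist v z * √2) (by positivity)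
    calc (1 + √2) * r * √2 = 2 * r + r * √2 := by linear_combination r * hsqrt
      _ ≤ ⟪z - v, e + n⟫ := by linarith
      _ ≤ ‖z - v‖ * ‖e + n‖ := real_inner_le_norm _ _
      _ = dist v z * √2 := by rw [o.norm_add, dist_comm, dist_eq_norm]
  · have hle : √2 ≤ 2 := by nlinarith [Real.sqrt_nonneg 2]
    calc (1 + √2) * r ≤ 4 * r - r := by nlinarith
      _ ≤ dist v c - dist c z := by rw [o.dist_add_smul_add c hr]; linarith
      _ ≤ dist v z := by linarith [dist_triangle_right v c z]

variable [Fact (Module.finrank ℝ V = 2)]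

lemma inner_eq (o : OrthonormalPair e n) (z w : V) :
    ⟪z, w⟫ = ⟪z, e⟫ * ⟪w, e⟫ + ⟪z, n⟫ * ⟪w, n⟫ := by
  let b := (basisOfOrthonormalOfCardEqFinrank o.orthonormal (by
    rw [Fintype.card_fin, Fact.out (p := Module.finrank ℝ V = 2)])).toOrthonormalBasis
      (by simpa using o.orthonormal)
  have hb₀ : b 0 = e := by simp [b]
  have hb₁ : b 1 = n := by simp [b]
  rw [← b.sum_inner_mul_inner, Fin.sum_univ_two, hb₀, hb₁, real_inner_comm w e, real_inner_comm w n]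

lemma ext (o : OrthonormalPair e n) {z w : V} (he : ⟪z, e⟫ = ⟪w, e⟫) (hn : ⟪z, n⟫ = ⟪w, n⟫) :
    z = w := by
  refine ext_inner_right ℝ fun v => ?_
  rw [o.inner_eq, o.inner_eq w, he, hn]

lemma eq_add_smul (o : OrthonormalPair e n) (z : V) : z = ⟪z, n⟫ • n + ⟪z, e⟫ • e := by
  refine o.ext ?_ ?_ <;>
    simp [inner_add_left, real_inner_smul_left, o.inner_eq_zero, o.symm.inner_eq_zero,
      o.norm_left, o.norm_right]

lemma affineSpan_eq_top (o : OrthonormalPair e n) {s : Set V} {u y : V} {t : ℝ} (hu : u ∈ s)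
    (ht : t ≠ 0) (he : u + t • e ∈ s) (hy : y ∈ s) (hyn : ⟪y - u, n⟫ ≠ 0) :
    affineSpan ℝ s = ⊤ := by
  have hdir {z : V} (hz : z ∈ s) : z - u ∈ (affineSpan ℝ s).direction :=
    AffineSubspace.vsub_mem_direction (mem_affineSpan ℝ hz) (mem_affineSpan ℝ hu)
  have hmem_e : e ∈ (affineSpan ℝ s).direction := by
    have := hdir he
    rwa [add_sub_cancel_left, Submodule.smul_mem_iff _ ht] at this
  have hmem_n : n ∈ (affineSpan ℝ s).direction := by
    rw [← Submodule.smul_mem_iff _ hyn, ← Submodule.add_mem_iff_left _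
      (Submodule.smul_mem _ ⟪y - u, e⟫ hmem_e), ← o.eq_add_smul]
    exact hdir hy
  rw [← AffineSubspace.direction_eq_top_iff_of_nonempty ⟨u, mem_affineSpan ℝ hu⟩, eq_top_iff]
  intro z _
  rw [o.eq_add_smul z]
  exact Submodule.add_mem _ (Submodule.smul_mem _ _ hmem_n) (Submodule.smul_mem _ _ hmem_e)

end OrthonormalPair

lemma exists_orthonormalPair [Fact (Module.finrank ℝ V = 2)] {x : V} (hx : x ≠ 0) :
    ∃ n, OrthonormalPair (‖x‖⁻¹ • x) n := by
  have : FiniteDimensional ℝ V := .of_fact_finrank_eq_two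
  have hunit : ‖‖x‖⁻¹ • x‖ = 1 := norm_smul_inv_norm (𝕜 := ℝ) hx
  obtain ⟨b, hb⟩ := Orthonormal.exists_orthonormalBasis_extension_of_card_eq (𝕜 := ℝ) (ι := Fin 2)
    (v := fun _ => ‖x‖⁻¹ • x) (s := {0}) (by simp [Fact.out (p := Module.finrank ℝ V = 2)])
    (by simpa using hunit)
  have hb₀ : b 0 = ‖x‖⁻¹ • x := hb 0 rfl
  refine ⟨b 1, hunit, b.orthonormal.1 1, ?_⟩
  rw [← hb₀]
  exact b.orthonormal.2 zero_ne_one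

lemma norm_sq_le_inner_of_inner_nonpos [Fact (Module.finrank ℝ V = 2)] {x y z w : V}
    (hxz : 0 < ⟪x, z⟫) (hxw : ⟪x, w⟫ ≤ 0) (hxy : ⟪x, y⟫ ≤ 0) (hyz : ⟪y - z, w - z⟫ ≤ 0)
    (hzw : 0 ≤ ⟪z - w, w⟫) : ‖z‖ ^ 2 ≤ ⟪y, z⟫ := by
  have hx : x ≠ 0 := by rintro rfl; simp at hxz
  obtain ⟨n, o⟩ := exists_orthonormalPair hx
  set e := ‖x‖⁻¹ • x with he
  have scale (v : V) : ⟪v, e⟫ = ‖x‖⁻¹ * ⟪x, v⟫ := by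
    rw [he, real_inner_smul_right, real_inner_comm]
  have hinv : 0 < ‖x‖⁻¹ := inv_pos.mpr (norm_pos_iff.mpr hx)
  have hze : 0 < ⟪z, e⟫ := scale z ▸ mul_pos hinv hxz
  have hwe : ⟪w, e⟫ ≤ 0 := scale w ▸ mul_nonpos_of_nonneg_of_nonpos hinv.le hxw
  have hye : ⟪y, e⟫ ≤ 0 := scale y ▸ mul_nonpos_of_nonneg_of_nonpos hinv.le hxy
  rw [o.inner_eq] at hyz hzw
  rw [← real_inner_self_eq_norm_sq, o.inner_eq z, o.inner_eq y]
  simp only [inner_sub_left] at hyz hzw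
  generalize ⟪z, e⟫ = z₁, ⟪z, n⟫ = z₂, ⟪w, e⟫ = w₁, ⟪w, n⟫ = w₂, ⟪y, e⟫ = y₁, ⟪y, n⟫ = y₂
    at hze hwe hye hyz hzw ⊢
  have hw₂ : 0 ≤ w₂ * (z₂ - w₂) := by nlinarith
  have hy₂ : (z₁ - y₁) * z₁ ≤ (y₂ - z₂) * (z₂ - w₂) := by nlinarith
  have hpos : 0 < (z₁ - y₁) * z₁ := mul_pos (by linarith) hze
  have hsq : 0 < (z₂ - w₂) ^ 2 := by
    have : z₂ - w₂ ≠ 0 := right_ne_zero_of_mul (hpos.trans_le hy₂).ne'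
    positivity
  have hyw : 0 ≤ (y₂ - z₂) * w₂ := by
    refine nonneg_of_mul_nonneg_left ?_ hsq
    calc 0 ≤ ((y₂ - z₂) * (z₂ - w₂)) * (w₂ * (z₂ - w₂)) := mul_nonneg (by linarith) hw₂
      _ = (y₂ - z₂) * w₂ * (z₂ - w₂) ^ 2 := by ring
  linarith

end InnerProductSpace

/-- A truthful and unanimous mechanism for two agents, as a function of the two reports. An
anonymous mechanism induces such rules by letting two blocs of agents report one point each. -/
structure IsTwoAgentRule {V : Type*} [MetricSpace V] (h : V → V → V) : Prop where
  truthful_left : ∀ x x' y, dist (h x y) x ≤ dist (h x' y) x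
  truthful_right : ∀ x y y', dist (h x y) y ≤ dist (h x y') y
  unanimous : ∀ x, h x x = x

/-- The directions in which the first agent may leave `v` while the second agent stays at `v`
without moving the output. In a plane it is the normal cone at `v` of the set `{h x v | x}` of
outcomes available to the first agent (`IsTwoAgentRule.mem_normalCone_iff`). -/
def normalCone {V : Type*} [Add V] (h : V → V → V) (v : V) : Set V := {k | h (v + k) v = v}

namespace IsTwoAgentRule

section MetricSpace

variable {V : Type*} [MetricSpace V] {h : V → V → V} {u x y : V}

protected lemma flip (H : IsTwoAgentRule h) : IsTwoAgentRule (flip h) :=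
  ⟨fun x x' y => H.truthful_right y x x', fun x y y' => H.truthful_left y y' x, H.unanimous⟩

lemma apply_left_of_eq (H : IsTwoAgentRule h) (hu : h x y = u) : h u y = u := by
  have hle := H.truthful_left u x y
  rwa [hu, dist_self, dist_le_zero] at hle

lemma apply_right_of_eq (H : IsTwoAgentRule h) (hu : h x y = u) : h x u = u :=
  H.flip.apply_left_of_eq hu

end MetricSpace

section InnerProductSpace

variable {V : Type*} [NormedAddCommGroup V] [InnerProductSpace ℝ V] {h : V → V → V} {u v x y k : V}

lemma apply_segment (H : IsTwoAgentRule h) (hu : h x y = u) {t : ℝ} (ht₀ : 0 ≤ t) (ht₁ : t ≤ 1) :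
    h (u + t • (x - u)) y = u := by
  rcases ht₁.lt_or_eq with ht₁ | rfl
  · have hx := H.truthful_left x (u + t • (x - u)) y
    have ht := H.truthful_left (u + t • (x - u)) x y
    rw [hu, dist_le_dist_iff_inner_le] at hx
    rw [hu, dist_le_dist_iff_le_inner, add_sub_cancel_left, real_inner_smul_left] at ht
    exact eq_of_norm_sq_sub_nonpos (by nlinarith [sq_nonneg ‖h (u + t • (x - u)) y - u‖])
  · rwa [one_smul, add_sub_cancel]

lemma inner_nonpos (H : IsTwoAgentRule h) (hu : h x y = u) : ⟪x - u, y - u⟫ ≤ 0 := by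
  rw [real_inner_comm]
  refine inner_nonpos_of_eventually_norm_le ?_
  filter_upwards [Ioc_mem_nhdsGT zero_lt_one] with t ht
  have hle := H.truthful_right (u + t • (x - u)) y (u + t • (x - u))
  rw [H.apply_segment hu ht.1.le ht.2, H.unanimous, dist_comm, dist_comm _ y, dist_eq_norm,
    dist_eq_norm] at hle
  rwa [sub_sub]

lemma inner_nonpos_of_dilation (H : IsTwoAgentRule h)
    (hdil : ∀ x, h x y = u → h (u + (3 / 2 : ℝ) • (x - u)) y = u) (hu : h x y = u) (x' : V) :
    ⟪x - u, h x' y - u⟫ ≤ 0 := by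
  have hpow (i : ℕ) : h (u + (3 / 2 : ℝ) ^ i • (x - u)) y = u := by
    induction i with
    | zero => rwa [pow_zero, one_smul, add_sub_cancel]
    | succ i ih => simpa only [add_sub_cancel_left, smul_smul, ← pow_succ'] using hdil _ ih
  have hbound (i : ℕ) : 2 * ⟪x - u, h x' y - u⟫ ≤ (2 / 3 : ℝ) ^ i * ‖h x' y - u‖ ^ 2 := by
    have hle := H.truthful_left (u + (3 / 2 : ℝ) ^ i • (x - u)) x' y
    rw [hpow, dist_le_dist_iff_inner_le, add_sub_cancel_left, real_inner_smul_left] at hle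
    have hinv : (2 / 3 : ℝ) ^ i * (3 / 2) ^ i = 1 := by rw [← mul_pow]; norm_num
    calc 2 * ⟪x - u, h x' y - u⟫
        = (2 / 3 : ℝ) ^ i * (2 * ((3 / 2) ^ i * ⟪x - u, h x' y - u⟫)) := by
          rw [mul_left_comm, ← mul_assoc ((2 / 3 : ℝ) ^ i), hinv, one_mul]
      _ ≤ _ := by gcongr
  have hlim : Tendsto (fun i : ℕ => (2 / 3 : ℝ) ^ i * ‖h x' y - u‖ ^ 2) atTop (𝓝 0) := by
    simpa using (tendsto_pow_atTop_nhds_zero_of_lt_one (r := (2 / 3 : ℝ)) (by norm_num)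
      (by norm_num)).mul_const (‖h x' y - u‖ ^ 2)
  linarith [ge_of_tendsto' hlim hbound]

lemma inner_nonpos_of_apply_right_eq (H : IsTwoAgentRule h) (hu : h x u = u) (x' : V) :
    ⟪x - u, h x' u - u⟫ ≤ 0 := by
  refine H.inner_nonpos_of_dilation (fun z hz => ?_) hu x'
  set w := h (u + (3 / 2 : ℝ) • (z - u)) u with hw
  have hz := hz ▸ H.truthful_left z (u + (3 / 2 : ℝ) • (z - u)) u
  rw [← hw, dist_le_dist_iff_inner_le] at hz
  have hw := H.inner_nonpos hw.symm
  rw [← sub_sub_sub_cancel_right _ w u, add_sub_cancel_left, ← neg_sub w u, inner_neg_right,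
    inner_sub_left, real_inner_smul_left, real_inner_self_eq_norm_sq] at hw
  exact eq_of_norm_sq_sub_nonpos (by linarith)

lemma dist_apply_antipodal_le (H : IsTwoAgentRule h) (c d : V) :
    dist (h (c + d) (c - d)) c ≤ ‖d‖ := by
  set u := h (c + d) (c - d) with hu
  have hdisc := H.inner_nonpos hu.symm
  rw [show c + d - u = d - (u - c) by abel, show c - d - u = -(d + (u - c)) by abel,
    inner_neg_right, inner_sub_left, inner_add_right, inner_add_right, real_inner_comm (u - c) d,
    real_inner_self_eq_norm_sq, real_inner_self_eq_norm_sq] at hdisc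
  rw [dist_eq_norm, ← sq_le_sq₀ (norm_nonneg _) (norm_nonneg _)]
  linarith

end InnerProductSpace

section Plane

variable {V : Type*} [NormedAddCommGroup V] [InnerProductSpace ℝ V] [Fact (Module.finrank ℝ V = 2)]
  {h : V → V → V} {e n u v w x y k : V}

/-- With `w = h z u`, the inequalities for `h · u` and `h z ·` confine `w` so tightly that `y` has
to lie beyond `z` as seen from `u`. -/
lemma norm_sq_le_inner (H : IsTwoAgentRule h) {x' z : V} (hu : h x y = u) (hz : h x' y = z)
    (hpos : 0 < ⟪x - u, z - u⟫) : ‖z - u‖ ^ 2 ≤ ⟪y - u, z - u⟫ := by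
  have hux := H.inner_nonpos_of_apply_right_eq (H.apply_right_of_eq hu) z
  have hzy := H.flip.inner_nonpos_of_apply_right_eq (H.apply_left_of_eq hz) u
  have hw := H.inner_nonpos (rfl : h z u = h z u)
  rw [← sub_sub_sub_cancel_right y z u, ← sub_sub_sub_cancel_right _ z u] at hzy
  rw [← sub_sub_sub_cancel_right z _ u, ← neg_sub _ u, inner_neg_right] at hw
  exact norm_sq_le_inner_of_inner_nonpos hpos hux (H.inner_nonpos hu) hzy (by linarith)

lemma apply_dilation (H : IsTwoAgentRule h) (hu : h x y = u) :
    h (u + (3 / 2 : ℝ) • (x - u)) y = u := by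
  set x' := u + (3 / 2 : ℝ) • (x - u) with hx'
  set z := h x' y with hz
  have hx'u : x' - u = (3 / 2 : ℝ) • (x - u) := by rw [hx', add_sub_cancel_left]
  have hx := hu ▸ H.truthful_left x x' y
  have hx' := hu ▸ H.truthful_left x' x y
  rw [← hz, dist_le_dist_iff_inner_le] at hx
  rw [← hz, dist_le_dist_iff_le_inner, hx'u, real_inner_smul_left] at hx'
  by_contra hne
  have hpos : 0 < ‖z - u‖ ^ 2 := by have := norm_pos_iff.mpr (sub_ne_zero.mpr hne); positivity
  have hbeyond := H.norm_sq_le_inner hu hz.symm (by linarith)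
  have hback := H.norm_sq_le_inner hz.symm hu (by
    rw [← sub_sub_sub_cancel_right x' z u, hx'u, ← neg_sub z u, inner_neg_right, inner_sub_left,
      real_inner_smul_left, real_inner_self_eq_norm_sq]
    linarith)
  rw [← sub_sub_sub_cancel_right y z u, ← neg_sub z u, norm_neg, inner_neg_right, inner_sub_left,
    real_inner_self_eq_norm_sq] at hback
  linarith

/-- The output is the metric projection of `x` onto the set `{h x' y | x'}`. -/
lemma variational_left (H : IsTwoAgentRule h) (x x' y : V) :
    ⟪x - h x y, h x' y - h x y⟫ ≤ 0 :=
  H.inner_nonpos_of_dilation (fun _ hz => H.apply_dilation hz) rfl x'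

lemma variational_right (H : IsTwoAgentRule h) (x y y' : V) :
    ⟪y - h x y, h x y' - h x y⟫ ≤ 0 :=
  H.flip.variational_left y y' x

lemma dist_left_le (H : IsTwoAgentRule h) (x x' y : V) : dist (h x y) (h x' y) ≤ dist x x' := by
  have hx := H.variational_left x x' y
  have hx' := H.variational_left x' x y
  have hmono : ‖h x y - h x' y‖ ^ 2 ≤ ⟪x - x', h x y - h x' y⟫ := by
    rw [← real_inner_self_eq_norm_sq]
    simp only [inner_sub_left, inner_sub_right] at hx hx' ⊢
    linarith
  have hcs := real_inner_le_norm (x - x') (h x y - h x' y)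
  rw [dist_eq_norm, dist_eq_norm]
  by_contra! hlt
  nlinarith [norm_nonneg (x - x')]

lemma continuous_uncurry (H : IsTwoAgentRule h) : Continuous (fun p : V × V => h p.1 p.2) := by
  refine (LipschitzWith.of_dist_le_mul (K := 2) fun p q => ?_).continuous
  calc dist (h p.1 p.2) (h q.1 q.2)
      ≤ dist (h p.1 p.2) (h q.1 p.2) + dist (h q.1 p.2) (h q.1 q.2) := dist_triangle _ _ _
    _ ≤ dist p.1 q.1 + dist p.2 q.2 :=
        add_le_add (H.dist_left_le _ _ _) (H.flip.dist_left_le _ _ _)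
    _ ≤ dist p q + dist p q := add_le_add (le_max_left _ _) (le_max_right _ _)
    _ = (2 : NNReal) * dist p q := by rw [NNReal.coe_ofNat, two_mul]

lemma mem_normalCone_iff (H : IsTwoAgentRule h) :
    k ∈ normalCone h v ↔ ∀ x, ⟪k, h x v - v⟫ ≤ 0 := by
  refine ⟨fun hk x => ?_, fun hk => ?_⟩
  · simpa only [add_sub_cancel_left] using H.inner_nonpos_of_apply_right_eq hk x
  · have hvar := H.variational_left (v + k) v v
    have hle := hk (v + k)
    rw [H.unanimous, ← sub_sub_sub_cancel_right (v + k) _ v, add_sub_cancel_left, ← neg_sub _ v,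
      inner_neg_right, inner_sub_left, real_inner_self_eq_norm_sq] at hvar
    exact eq_of_norm_sq_sub_nonpos (by linarith)

lemma smul_mem_normalCone (H : IsTwoAgentRule h) (hk : k ∈ normalCone h v) {t : ℝ} (ht : 0 ≤ t) :
    t • k ∈ normalCone h v := by
  rw [H.mem_normalCone_iff] at hk ⊢
  intro x
  rw [real_inner_smul_left]
  exact mul_nonpos_of_nonneg_of_nonpos ht (hk x)

lemma smul_mem_normalCone_iff (H : IsTwoAgentRule h) {t : ℝ} (ht : 0 < t) :
    t • k ∈ normalCone h v ↔ k ∈ normalCone h v := by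
  refine ⟨fun hk => ?_, fun hk => H.smul_mem_normalCone hk ht.le⟩
  have hinv := H.smul_mem_normalCone hk (inv_nonneg.mpr ht.le)
  rwa [smul_smul, inv_mul_cancel₀ ht.ne', one_smul] at hinv

lemma mem_normalCone_add_smul (H : IsTwoAgentRule h) (hk : k ∈ normalCone h v) {t : ℝ}
    (ht : 0 ≤ t) : k ∈ normalCone h (v + t • k) := by
  have hv : h (v + t • k + k) v = v := by
    have : h (v + (t + 1) • k) v = v := H.smul_mem_normalCone hk (by positivity)
    rwa [add_smul, one_smul, ← add_assoc] at this
  set p := v + t • k with hp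
  have hback := H.variational_right (p + k) p v
  have hahead := H.variational_right (p + k) p (p + k)
  have hvp : v - h (p + k) p = p - h (p + k) p - t • k := by rw [hp]; abel
  rw [hv, hvp, inner_sub_right, real_inner_smul_right, real_inner_self_eq_norm_sq] at hback
  rw [H.unanimous, add_sub_right_comm p k, inner_add_right, real_inner_self_eq_norm_sq] at hahead
  exact (eq_of_norm_sq_sub_nonpos (by nlinarith [sq_nonneg ‖p - h (p + k) p‖])).symm

lemma isClosed_normalCone_graph (H : IsTwoAgentRule h) :
    IsClosed {p : V × V | p.2 ∈ normalCone h p.1} :=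
  isClosed_eq (H.continuous_uncurry.comp (g := fun p : V × V => h p.1 p.2)
    (f := fun p : V × V => (p.1 + p.2, p.1)) (by fun_prop)) continuous_fst

lemma exists_apply_add_eq (H : IsTwoAgentRule h) {S : Set V} (hS : IsCompact S)
    (hmem : ∀ l : ℝ, 0 < l → h (y + l • e) y ∈ S) : ∃ v ∈ S, h (v + e) y = v := by
  set u : ℕ → V := fun i => h (y + ((i : ℝ) + 1) • e) y
  obtain ⟨v, hv, φ, hφ, hlim⟩ := hS.tendsto_subseq fun i => hmem ((i : ℝ) + 1) (by positivity)
  refine ⟨v, hv, ?_⟩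
  have hstep (i : ℕ) : h (u i + (1 / ((i : ℝ) + 1)) • (y - u i) + e) y = u i := by
    have hpos : (0 : ℝ) < (i : ℝ) + 1 := by positivity
    have := H.apply_segment (x := y + ((i : ℝ) + 1) • e) (u := u i) rfl
      (t := 1 / ((i : ℝ) + 1)) (by positivity) (by rw [div_le_one hpos]; linarith)
    rwa [add_sub_right_comm, smul_add, smul_smul, one_div_mul_cancel hpos.ne', one_smul,
      ← add_assoc] at this
  have hcoef : Tendsto (fun i => 1 / ((φ i : ℝ) + 1)) atTop (𝓝 0) :=
    tendsto_one_div_add_atTop_nhds_zero_nat.comp hφ.tendsto_atTop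
  have hpt : Tendsto (fun i => u (φ i) + (1 / ((φ i : ℝ) + 1)) • (y - u (φ i)) + e) atTop
      (𝓝 (v + (0 : ℝ) • (y - v) + e)) :=
    (hlim.add (hcoef.smul (tendsto_const_nhds.sub hlim))).add_const e
  rw [zero_smul, add_zero] at hpt
  have himg := (H.continuous_uncurry.tendsto (v + e, y)).comp (hpt.prodMk_nhds tendsto_const_nhds)
  exact tendsto_nhds_unique himg (hlim.congr fun i => (hstep (φ i)).symm)

/-- The number `a` is the coordinate along `n` of the output when the second agent returns
to `w`. -/
lemma exists_inner_sq_le (H : IsTwoAgentRule h) (o : OrthonormalPair e n) (he : e ∈ normalCone h w)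
    {s : ℝ} (hu : h x (w + s • n) = u) (hx : 0 ≤ ⟪x - w, e⟫) (hue : 0 ≤ ⟪u - w, e⟫) :
    ∃ a, 0 ≤ a * (⟪x - w, n⟫ - a) ∧ ⟪u - w, e⟫ ^ 2 ≤ (s - ⟪u - w, n⟫) * (⟪u - w, n⟫ - a) := by
  refine ⟨⟪h x w - w, n⟫, ?_⟩
  have hze := (real_inner_comm e _).trans_le (H.mem_normalCone_iff.mp he x)
  have hz := H.inner_nonpos (rfl : h x w = h x w)
  have hvar := H.variational_right x (w + s • n) w
  rw [← sub_sub_sub_cancel_right x _ w, ← neg_sub _ w, inner_neg_right, o.inner_eq] at hz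
  rw [hu, ← sub_sub_sub_cancel_right _ u w, ← sub_sub_sub_cancel_right (h x w) u w,
    add_sub_cancel_left, o.inner_eq] at hvar
  simp only [inner_sub_left _ (_ - w), real_inner_smul_left,
    o.symm.inner_eq_zero, o.inner_self_right] at hz hvar
  constructor <;> nlinarith

lemma apply_add_smul_mem (H : IsTwoAgentRule h) (o : OrthonormalPair e n)
    (he : e ∈ normalCone h w) {s l : ℝ} (hs : 0 ≤ s) (hl : 0 ≤ l)
    (hu : h (w + s • n + l • e) (w + s • n) = u) :
    u = w + s • n ∨ ⟪u - w, n⟫ ∈ Set.Ico 0 s ∧ ⟪u - w, e⟫ ∈ Set.Icc 0 (s / 2) := by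
  have hxw : w + s • n + l • e - w = s • n + l • e := by abel
  have hdisc := H.inner_nonpos hu
  rw [← sub_sub_sub_cancel_right _ u w, ← sub_sub_sub_cancel_right (w + s • n) u w, hxw,
    add_sub_cancel_left, o.inner_eq] at hdisc
  simp only [inner_sub_left _ (u - w), inner_add_left, real_inner_smul_left, o.inner_eq_zero,
    o.symm.inner_eq_zero, o.inner_self_left, o.inner_self_right] at hdisc
  have hue : 0 ≤ ⟪u - w, e⟫ := by
    by_contra! hneg
    nlinarith [sq_nonneg (s - ⟪u - w, n⟫)]
  obtain ⟨a, ha, hsq⟩ := H.exists_inner_sq_le o he hu (by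
    simpa [hxw, inner_add_left, real_inner_smul_left, o.symm.inner_eq_zero, o.norm_left]) hue
  rw [hxw, inner_add_left, real_inner_smul_left, real_inner_smul_left, o.inner_eq_zero,
    o.inner_self_right] at ha
  have ha₀ : 0 ≤ a := by nlinarith
  have has : a ≤ s := by nlinarith
  rcases hue.eq_or_lt with hzero | hpos
  · have hun : ⟪u - w, n⟫ = s := by
      rw [← hzero] at hdisc
      nlinarith [sq_nonneg (s - ⟪u - w, n⟫)]
    left
    rw [← sub_eq_iff_eq_add', o.eq_add_smul (u - w), hun, ← hzero, zero_smul, add_zero]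
  · have hprod : 0 < (s - ⟪u - w, n⟫) * (⟪u - w, n⟫ - a) := by nlinarith
    have hlt : ⟪u - w, n⟫ < s := by
      by_contra! hle
      nlinarith
    have hgt : a < ⟪u - w, n⟫ := by
      by_contra! hle
      nlinarith
    refine .inr ⟨⟨by linarith, hlt⟩, hue, ?_⟩
    nlinarith [sq_nonneg (s - 2 * ⟪u - w, n⟫)]

lemma exists_mem_normalCone_add (H : IsTwoAgentRule h) (o : OrthonormalPair e n)
    (he : e ∈ normalCone h w) {s : ℝ} (hs : 0 < s) :
    ∃ a > (0 : ℝ), ∃ b ≤ s / 2, e ∈ normalCone h (w + a • n + b • e) := by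
  let S : Set V := (fun p : ℝ × ℝ => w + p.1 • n + p.2 • e) '' Set.Icc 0 s ×ˢ Set.Icc 0 (s / 2)
  have hS : IsCompact S := (isCompact_Icc.prod isCompact_Icc).image (by fun_prop)
  have hmem (l : ℝ) (hl : 0 < l) : h (w + s • n + l • e) (w + s • n) ∈ S := by
    set u := h (w + s • n + l • e) (w + s • n) with hu
    rcases H.apply_add_smul_mem o he hs.le hl.le hu.symm with heq | ⟨hn, he⟩
    · exact ⟨(s, 0), ⟨⟨hs.le, le_rfl⟩, le_rfl, by positivity⟩, by simp [heq]⟩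
    · exact ⟨(⟪u - w, n⟫, ⟪u - w, e⟫), ⟨Set.Ico_subset_Icc_self hn, he⟩, by
        dsimp only
        rw [add_assoc, ← o.eq_add_smul, add_sub_cancel]⟩
  obtain ⟨-, ⟨⟨a, b⟩, ⟨⟨ha, -⟩, hb, hbs⟩, rfl⟩, hv⟩ := H.exists_apply_add_eq hS hmem
  dsimp only at ha hb hbs hv
  rcases hb.eq_or_lt with rfl | hb
  · refine ⟨s, hs, 0, by positivity, ?_⟩
    rw [zero_smul, add_zero] at hv ⊢
    rw [H.mem_normalCone_iff]
    intro x
    have hvar := H.variational_left (w + a • n + e) x (w + s • n)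
    rw [hv, add_sub_cancel_left, inner_sub_right, inner_add_right, real_inner_smul_right,
      o.inner_eq_zero, mul_zero] at hvar
    rwa [inner_sub_right, inner_add_right, real_inner_smul_right, o.inner_eq_zero, mul_zero]
  · refine ⟨a, ha.lt_of_ne' fun ha₀ => ?_, b, hbs, H.apply_right_of_eq hv⟩
    rw [ha₀, zero_smul, add_zero] at hv
    obtain ⟨c, hc, hsq⟩ := H.exists_inner_sq_le o he hv
      (by
        rw [add_assoc, add_sub_cancel_left, inner_add_left, real_inner_smul_left, o.inner_self_left]
        positivity)
      (by simp [real_inner_smul_left, o.norm_left, hb.le])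
    simp only [add_assoc, add_sub_cancel_left, inner_add_left, real_inner_smul_left,
      o.inner_self_left, o.inner_eq_zero] at hc hsq
    have hc₀ : c = 0 := by nlinarith
    nlinarith

lemma mem_normalCone_or_inner_pos (H : IsTwoAgentRule h) (o : OrthonormalPair e n) {a b : ℝ}
    (he : e ∈ normalCone h (w + a • n + b • e)) (hn : ⟪v - w, n⟫ ≤ a) (hb : b ≤ ⟪v - w, e⟫) :
    e ∈ normalCone h v ∨ 0 < ⟪h (v + e) v - v, n⟫ := by
  set p := w + a • n + b • e + (⟪v - w, e⟫ - b) • e with hp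
  have hv : v = p + (a - ⟪v - w, n⟫) • (-n) := by
    rw [← sub_eq_zero]
    calc v - (p + (a - ⟪v - w, n⟫) • (-n))
        = (v - w) - (⟪v - w, n⟫ • n + ⟪v - w, e⟫ • e) := by rw [hp]; module
      _ = 0 := sub_eq_zero.mpr (o.eq_add_smul _)
  have hep : e ∈ normalCone h p := H.mem_normalCone_add_smul he (by linarith)
  have hs : 0 ≤ a - ⟪v - w, n⟫ := by linarith
  generalize a - ⟪v - w, n⟫ = s at hv hs
  rcases H.apply_add_smul_mem o.neg_right hep hs zero_le_one rfl with heq | ⟨⟨-, hlt⟩, -⟩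
  · rw [one_smul, ← hv] at heq
    exact .inl heq
  · right
    rw [one_smul, ← hv, inner_neg_right] at hlt
    nth_rw 3 [hv]
    rw [← sub_sub, inner_sub_left, real_inner_smul_left, inner_neg_left, o.inner_self_right]
    linarith

lemma eventually_mem_normalCone_of_orthonormalPair (H : IsTwoAgentRule h)
    (o : OrthonormalPair e n) (he : e ∈ normalCone h w) {t : ℝ} (ht : 0 < t) :
    ∀ᶠ v in 𝓝 (w + t • e), e ∈ normalCone h v := by
  obtain ⟨a, ha, b, hb, hab⟩ := H.exists_mem_normalCone_add o he ht
  obtain ⟨a', ha', b', hb', hab'⟩ := H.exists_mem_normalCone_add o.neg_right he ht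
  have hn : ⟪w + t • e - w, n⟫ = 0 := by
    rw [add_sub_cancel_left, real_inner_smul_left, o.inner_eq_zero, mul_zero]
  have he : t / 2 < ⟪w + t • e - w, e⟫ := by
    rw [add_sub_cancel_left, real_inner_smul_left, o.inner_self_left]
    linarith
  have hcont (m : V) : Continuous fun v : V => ⟪v - w, m⟫ := by fun_prop
  filter_upwards [(hcont n).continuousAt.eventually_lt_const (hn.trans_lt ha),
    (hcont n).continuousAt.eventually_const_lt ((neg_lt_zero.mpr ha').trans_eq hn.symm),
    (hcont e).continuousAt.eventually_const_lt he] with v hva hva' hve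
  rcases H.mem_normalCone_or_inner_pos o hab hva.le (by linarith) with hev | hpos
  · exact hev
  rcases H.mem_normalCone_or_inner_pos o.neg_right hab' (by rw [inner_neg_right]; linarith)
    (by linarith) with hev | hneg
  · exact hev
  rw [inner_neg_right] at hneg
  linarith

lemma eventually_mem_normalCone (H : IsTwoAgentRule h) (hk : k ≠ 0) (hkw : k ∈ normalCone h w)
    {t : ℝ} (ht : 0 < t) : ∀ᶠ v in 𝓝 (w + t • k), k ∈ normalCone h v := by
  obtain ⟨n, o⟩ := exists_orthonormalPair hk
  have hnorm : 0 < ‖k‖ := norm_pos_iff.mpr hk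
  have hev := H.eventually_mem_normalCone_of_orthonormalPair o
    (H.smul_mem_normalCone hkw (by positivity)) (t := t * ‖k‖) (by positivity)
  simpa only [mul_smul, smul_smul, mul_inv_cancel₀ hnorm.ne', one_smul, mul_one, mul_assoc,
    H.smul_mem_normalCone_iff (inv_pos.mpr hnorm)] using hev

end Plane

end IsTwoAgentRule

lemma sub_mem_normalCone_iff {V : Type*} [AddCommGroup V] {h : V → V → V} {x v : V} :
    x - v ∈ normalCone h v ↔ h x v = v := by
  change h (v + (x - v)) v = v ↔ _
  rw [add_sub_cancel]

/-- Displacements of the first agent never turn by an obtuse angle on `U`: if for `v ∈ U` it can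
hold the output at `v` from `v + k`, and at `v - b` from `v`, then `k` and `b` form a nonobtuse
angle. -/
def AcuteOn {V : Type*} [NormedAddCommGroup V] [InnerProductSpace ℝ V] (h : V → V → V)
    (U : Set V) : Prop :=
  ∀ v ∈ U, ∀ k ∈ normalCone h v, ∀ b, b ∈ normalCone h (v - b) → 0 ≤ ⟪k, b⟫

namespace IsTwoAgentRule

section Plane

variable {V : Type*} [NormedAddCommGroup V] [InnerProductSpace ℝ V] [Fact (Module.finrank ℝ V = 2)]
  {h : V → V → V} {U : Set V} {e n p q u v x k : V}

lemma isOpen_notMem_normalCone (H : IsTwoAgentRule h) (k : V) :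
    IsOpen {v | k ∉ normalCone h v} :=
  (H.isClosed_normalCone_graph.preimage (f := fun v : V => (v, k)) (by fun_prop)).isOpen_compl

lemma exists_apply_sub_smul_eq (H : IsTwoAgentRule h) (he : ∀ᶠ v in 𝓝 u, e ∈ normalCone h v) :
    ∃ t > (0 : ℝ), h u (u - t • e) = u - t • e := by
  obtain ⟨t, het, ht : 0 < t⟩ :=
    (((tendsto_sub_smul u e).eventually he).and self_mem_nhdsWithin).exists
  exact ⟨t, ht, by simpa [normalCone] using H.smul_mem_normalCone het ht.le⟩

lemma inner_nonneg_of_eventually_mem_normalCone (H : IsTwoAgentRule h)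
    (he : ∀ᶠ v in 𝓝 u, e ∈ normalCone h v) (hk : k ∈ normalCone (flip h) u) : 0 ≤ ⟪k, e⟫ := by
  obtain ⟨t, ht, hut⟩ := H.exists_apply_sub_smul_eq he
  have hle := H.flip.mem_normalCone_iff.mp hk (u - t • e)
  rw [show flip h (u - t • e) u = u - t • e from hut, sub_sub_cancel_left, inner_neg_right,
    real_inner_smul_right] at hle
  exact nonneg_of_mul_nonneg_right (by linarith) ht

lemma inner_pos_of_mem_normalCone (H : IsTwoAgentRule h) (o : OrthonormalPair e n)
    (hk : k ∈ normalCone h v) (hk₀ : k ≠ 0) (hn : n ∉ normalCone h v) (hn' : -n ∉ normalCone h v)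
    (hke : 0 ≤ ⟪k, e⟫) : 0 < ⟪k, e⟫ := by
  refine hke.lt_of_ne fun hzero => ?_
  have hkn : k = ⟪k, n⟫ • n := by
    conv_lhs => rw [o.eq_add_smul k, ← hzero, zero_smul, add_zero]
  rcases lt_trichotomy ⟪k, n⟫ 0 with hneg | heq | hpos
  · rw [hkn, ← neg_smul_neg, H.smul_mem_normalCone_iff (neg_pos.mpr hneg)] at hk
    exact hn' hk
  · exact hk₀ (by rw [hkn, heq, zero_smul])
  · rw [hkn, H.smul_mem_normalCone_iff hpos] at hk
    exact hn hk

lemma exists_mul_norm_le_inner (H : IsTwoAgentRule h) {S : Set V} (hS : IsCompact S)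
    (hpos : ∀ v ∈ S, ∀ k ∈ normalCone h v, k ≠ 0 → 0 < ⟪k, e⟫) :
    ∃ η > 0, ∀ v ∈ S, ∀ k ∈ normalCone h v, η * ‖k‖ ≤ ⟪k, e⟫ := by
  have : FiniteDimensional ℝ V := .of_fact_finrank_eq_two
  have : ProperSpace V := FiniteDimensional.proper ℝ V
  have hcompact : IsCompact ((S ×ˢ Metric.sphere (0 : V) 1) ∩ {p | p.2 ∈ normalCone h p.1}) :=
    (hS.prod (isCompact_sphere 0 1)).inter_right H.isClosed_normalCone_graph
  obtain ⟨η, hη, hle⟩ := hcompact.exists_forall_le' (f := fun p : V × V => ⟪p.2, e⟫) (a := 0)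
    (by fun_prop) fun p hp => hpos p.1 hp.1.1 p.2 hp.2 (ne_zero_of_mem_unit_sphere ⟨p.2, hp.1.2⟩)
  refine ⟨η, hη, fun v hv k hk => ?_⟩
  rcases eq_or_ne k 0 with rfl | hk₀
  · simp
  have hnorm : 0 < ‖k‖ := norm_pos_iff.mpr hk₀
  have hunit := hle (v, ‖k‖⁻¹ • k) ⟨⟨hv, by simp [norm_smul, hnorm.ne']⟩,
    H.smul_mem_normalCone hk (by positivity)⟩
  rwa [real_inner_smul_left, inv_mul_eq_div, le_div_iff₀ hnorm] at hunit

lemma apply_trans (H : IsTwoAgentRule h) (hU : AcuteOn (flip h) U) (hv : v ∈ U)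
    (hxu : h x u = u) (hvu : h v u = v) : h x v = v := by
  have hacute := hU v hv (u - v) (sub_mem_normalCone_iff.mpr hvu) (v - h x v) (by
    rw [sub_sub_cancel]
    exact sub_mem_normalCone_iff.mpr (H.apply_left_of_eq rfl))
  have hvar := H.variational_right x v u
  rw [hxu, ← sub_add_sub_cancel u v, inner_add_right, real_inner_self_eq_norm_sq,
    real_inner_comm] at hvar
  exact (eq_of_norm_sq_sub_nonpos (by linarith)).symm

lemma convex_setOf_apply_eq (H : IsTwoAgentRule h) (x : V) : Convex ℝ {v | h x v = v} := by
  intro p (hp : h x p = p) q (hq : h x q = q) a b ha hb hab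
  set v := a • p + b • q
  have hvp := H.variational_right x v p
  have hvq := H.variational_right x v q
  have hdec : v - h x v = a • (p - h x v) + b • (q - h x v) := by
    rw [smul_sub, smul_sub, sub_add_sub_comm, ← add_smul, hab, one_smul]
  refine (eq_of_norm_sq_sub_nonpos ?_).symm
  rw [hp] at hvp
  rw [hq] at hvq
  calc ‖v - h x v‖ ^ 2 = a * ⟪v - h x v, p - h x v⟫ + b * ⟪v - h x v, q - h x v⟫ := by
        rw [← real_inner_smul_right, ← real_inner_smul_right, ← inner_add_right, ← hdec,
          real_inner_self_eq_norm_sq]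
    _ ≤ 0 := add_nonpos (mul_nonpos_of_nonneg_of_nonpos ha hvp)
        (mul_nonpos_of_nonneg_of_nonpos hb hvq)

lemma interior_setOf_apply_eq_nonempty (H : IsTwoAgentRule h) (o : OrthonormalPair e n)
    (he : ∀ᶠ v in 𝓝 u, e ∈ normalCone h v) (hn : n ∉ normalCone (flip h) u) :
    (interior {v | h u v = v}).Nonempty := by
  have : FiniteDimensional ℝ V := .of_fact_finrank_eq_two
  obtain ⟨t, ht, hut⟩ := H.exists_apply_sub_smul_eq he
  obtain ⟨y, hy⟩ : ∃ y, 0 < ⟪n, h u y - u⟫ := by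
    simpa only [H.flip.mem_normalCone_iff, not_forall, not_le, flip] using hn
  rw [(H.convex_setOf_apply_eq u).interior_nonempty_iff_affineSpan_eq_top]
  refine o.affineSpan_eq_top (u := u) (y := h u y) (t := -t) (H.unanimous u)
    (neg_ne_zero.mpr ht.ne') ?_ (H.apply_right_of_eq rfl) (by rw [real_inner_comm]; exact hy.ne')
  rwa [neg_smul, ← sub_eq_add_neg]

lemma sub_mem_normalCone_flip (H : IsTwoAgentRule h) (hU : AcuteOn (flip h) U)
    (hsub : ∀ v, normalCone h v ⊆ normalCone (flip h) v) (hv : v ∈ U) (huv : h u v = v)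
    (hxu : h x u = u) : x - v ∈ normalCone (flip h) v :=
  hsub v <| sub_mem_normalCone_iff.mpr <|
    H.apply_trans hU hv hxu (sub_mem_normalCone_iff.mp (hsub v (sub_mem_normalCone_iff.mpr huv)))

lemma inner_nonneg_of_mem_interior (H : IsTwoAgentRule h) (hU : AcuteOn (flip h) U)
    (hsub : ∀ v, normalCone h v ⊆ normalCone (flip h) v) (hp : h p u = u) (hq : h q u = u)
    (hv : v ∈ interior ({v | h u v = v} ∩ U)) : 0 ≤ ⟪p - v, q - v⟫ := by
  have hmem (v x : V) (hv : v ∈ {v | h u v = v} ∩ U) (hx : h x u = u) :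
      x - v ∈ normalCone (flip h) v := H.sub_mem_normalCone_flip hU hsub hv.2 hv.1 hx
  obtain ⟨s, hsv, hs : 0 < s⟩ := (((tendsto_sub_smul v (q - v)).eventually
    (mem_interior_iff_mem_nhds.mp hv)).and self_mem_nhdsWithin).exists
  have hqs := hmem _ q hsv hq
  rw [show q - (v - s • (q - v)) = (1 + s) • (q - v) by module,
    H.flip.smul_mem_normalCone_iff (by positivity)] at hqs
  have hle := hU v (interior_subset hv).2 (p - v) (hmem v p (interior_subset hv) hp) _
    (H.flip.smul_mem_normalCone hqs hs.le)
  rw [real_inner_smul_right] at hle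
  exact nonneg_of_mul_nonneg_right hle hs

lemma inner_nonneg_of_acuteOn (H : IsTwoAgentRule h) (o : OrthonormalPair e n) (hU₀ : IsOpen U)
    (hU : AcuteOn (flip h) U) (hsub : ∀ v, normalCone h v ⊆ normalCone (flip h) v)
    (he : ∀ v ∈ U, e ∈ normalCone h v) (hu : u ∈ U) (hn : n ∉ normalCone (flip h) u)
    (hp : h p u = u) (hq : h u q = u) : 0 ≤ ⟪p - u, q - u⟫ := by
  have hqu : h q u = u := H.apply_trans hU hu (H.unanimous q) hq
  have hint := H.interior_setOf_apply_eq_nonempty o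
    (Filter.eventually_of_mem (hU₀.mem_nhds hu) he) hn
  have hclosure : u ∈ closure (interior {v | h u v = v}) := by
    rw [(H.convex_setOf_apply_eq u).closure_interior_eq_closure_of_nonempty_interior hint]
    exact subset_closure (H.unanimous u)
  have hclosed : IsClosed {v : V | 0 ≤ ⟪p - v, q - v⟫} := isClosed_le (by fun_prop) (by fun_prop)
  refine hclosed.closure_subset_iff.mpr (fun v hv => ?_) (hU₀.inter_closure ⟨hu, hclosure⟩)
  refine H.inner_nonneg_of_mem_interior hU hsub hp hqu ?_
  rw [interior_inter, hU₀.interior_eq]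
  exact hv.symm

lemma inner_nonneg_of_acuteOn_of_eventually (H : IsTwoAgentRule h) (hU : AcuteOn h U) (hv : v ∈ U)
    (he : ∀ᶠ w in 𝓝 v, e ∈ normalCone h w) (hk : k ∈ normalCone h v) : 0 ≤ ⟪k, e⟫ := by
  obtain ⟨t, het, ht : 0 < t⟩ :=
    (((tendsto_sub_smul v e).eventually he).and self_mem_nhdsWithin).exists
  have hle := hU v hv k hk (t • e) (H.smul_mem_normalCone het ht.le)
  rw [real_inner_smul_right] at hle
  exact nonneg_of_mul_nonneg_right hle ht

lemma eventually_sub_mem_normalCone (H : IsTwoAgentRule h) (hu : h p q = u) (hne : p ≠ u)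
    (hright : ⟪p - u, q - u⟫ = 0) : ∀ᶠ v in 𝓝 (p + q - u), p - u ∈ normalCone h v := by
  have hmem : p - u ∈ normalCone h q := by
    rw [H.mem_normalCone_iff]
    intro x
    have hvar := H.variational_left p x q
    rw [hu] at hvar
    rwa [← sub_sub_sub_cancel_right (h x q) q u, inner_sub_right, hright, sub_zero]
  have hev := H.eventually_mem_normalCone (sub_ne_zero.mpr hne) hmem one_pos
  rwa [one_smul, ← add_sub_assoc, add_comm q] at hev

lemma apply_antipodal_ne (H : IsTwoAgentRule h) {c d : V} (hd : d ∉ normalCone h (c - d)) :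
    h (c + d) (c - d) ≠ c - d := fun heq => by
  rw [← sub_mem_normalCone_iff, add_sub_sub_cancel, ← two_smul ℝ,
    H.smul_mem_normalCone_iff two_pos] at heq
  exact hd heq

lemma exists_apply_right_angle (H : IsTwoAgentRule h) (o : OrthonormalPair e n)
    (hU₀ : IsOpen U) (hne : U.Nonempty) (hU : AcuteOn (flip h) U)
    (hsub : ∀ v, normalCone h v ⊆ normalCone (flip h) v) (he : ∀ v ∈ U, e ∈ normalCone h v)
    (hn : ∀ v ∈ U, n ∉ normalCone (flip h) v) (hn' : ∀ v ∈ U, -n ∉ normalCone (flip h) v) :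
    ∃ p q, p ≠ h p q ∧ q ≠ h p q ∧ ⟪p - h p q, q - h p q⟫ = 0 ∧ p + q - h p q ∈ U := by
  obtain ⟨c, hc⟩ := hne
  obtain ⟨ε, hε, hball⟩ := Metric.nhds_basis_closedBall.mem_iff.mp (hU₀.mem_nhds hc)
  have hd : ‖ε • n‖ = ε := by rw [norm_smul, o.norm_right, mul_one, Real.norm_of_nonneg hε.le]
  have hmem {v : V} (hv : ‖v - c‖ ≤ ε) : v ∈ U := hball (mem_closedBall_iff_norm.mpr hv)
  have hadd : c + ε • n ∈ U := hmem (by rw [add_sub_cancel_left, hd])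
  have hsub' : c - ε • n ∈ U := hmem (by rw [sub_sub_cancel_left, norm_neg, hd])
  have hpq := H.dist_apply_antipodal_le c (ε • n)
  rw [hd, dist_eq_norm] at hpq
  have hneq : h (c + ε • n) (c - ε • n) ≠ c - ε • n := H.apply_antipodal_ne fun hmem =>
    hn _ hsub' ((H.flip.smul_mem_normalCone_iff hε).mp (hsub _ hmem))
  have hnep : h (c + ε • n) (c - ε • n) ≠ c + ε • n := by
    have := H.flip.apply_antipodal_ne (c := c) (d := ε • -n) fun hmem => by
      rw [smul_neg, sub_neg_eq_add, ← smul_neg, H.flip.smul_mem_normalCone_iff hε] at hmem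
      exact hn' _ hadd hmem
    rwa [smul_neg, sub_neg_eq_add, ← sub_eq_add_neg] at this
  refine ⟨c + ε • n, c - ε • n, hnep.symm, hneq.symm, ?_, hmem ?_⟩
  · exact (H.inner_nonpos rfl).antisymm (H.inner_nonneg_of_acuteOn o hU₀ hU hsub he (hmem hpq)
      (hn _ (hmem hpq)) (H.apply_right_of_eq rfl) (H.apply_left_of_eq rfl))
  · rwa [add_add_sub_cancel, sub_right_comm, add_sub_cancel_right, norm_sub_rev]

lemma exists_orthonormalPair_inner_nonneg (H : IsTwoAgentRule h) (o : OrthonormalPair e n)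
    (hU₀ : IsOpen U) (hne : U.Nonempty) (hU : AcuteOn (flip h) U)
    (hsub : ∀ v, normalCone h v ⊆ normalCone (flip h) v) (he : ∀ v ∈ U, e ∈ normalCone h v)
    (hn : ∀ v ∈ U, n ∉ normalCone (flip h) v) (hn' : ∀ v ∈ U, -n ∉ normalCone (flip h) v) :
    ∃ a b, OrthonormalPair a b ∧ ∃ W : Set V, IsOpen W ∧ W.Nonempty ∧
      ∀ v ∈ W, ∀ k ∈ normalCone (flip h) v, 0 ≤ ⟪k, a⟫ ∧ 0 ≤ ⟪k, b⟫ := by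
  obtain ⟨p, q, hp, hq, hright, hmem⟩ := H.exists_apply_right_angle o hU₀ hne hU hsub he hn hn'
  have hcone_p := H.eventually_sub_mem_normalCone rfl hp hright
  have hcone_q := H.flip.eventually_sub_mem_normalCone (p := q) (q := p) rfl hq
    (by rwa [real_inner_comm])
  rw [add_comm q] at hcone_q
  obtain ⟨W, hW, hWo, hWmem⟩ := eventually_nhds_iff.mp
    ((hU₀.eventually_mem hmem).and (hcone_p.eventually_nhds.and hcone_q.eventually_nhds))
  have hinv (z : V) : 0 ≤ ‖z‖⁻¹ := by positivity
  refine ⟨_, _, .of_inner_eq_zero (sub_ne_zero.mpr hp) (sub_ne_zero.mpr hq) hright, W, hWo,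
    ⟨_, hWmem⟩, fun v hv k hk => ?_⟩
  obtain ⟨hvU, hvp, hvq⟩ := hW v hv
  rw [real_inner_smul_right, real_inner_smul_right]
  exact ⟨mul_nonneg (hinv _) (H.flip.inner_nonneg_of_acuteOn_of_eventually hU hvU
      (hvp.mono fun _ h => hsub _ h) hk),
    mul_nonneg (hinv _) (H.flip.inner_nonneg_of_acuteOn_of_eventually hU hvU hvq hk)⟩

end Plane

end IsTwoAgentRule

/-- A truthful, unanimous and anonymous mechanism for `N` agents. Anonymity is encoded by letting
the mechanism take the multiset of reports; its values on multisets of other sizes are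
unconstrained. -/
structure IsAnonymousRule {V : Type*} [MetricSpace V] (N : ℕ) (F : Multiset V → V) : Prop where
  truthful : ∀ a a' s, card s + 1 = N → dist (F (a ::ₘ s)) a ≤ dist (F (a' ::ₘ s)) a
  unanimous : ∀ a, F (replicate N a) = a

/-- The two-agent rule induced by a bloc of `j` agents and a bloc of `k` agents, each of which
reports a single point. -/
def splitRule {V : Type*} (F : Multiset V → V) (j k : ℕ) (x y : V) : V :=
  F (replicate j x + replicate k y)

/-- Some profile of `N` reports, not all equal, lies in a disc of radius `r` but has a report at
distance at least `β * r` from the output: the mechanism is not better than `β`-robust. -/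
def RobustnessFails {V : Type*} [MetricSpace V] (N : ℕ) (F : Multiset V → V) (β : ℝ) : Prop :=
  ∃ s, card s = N ∧ (∃ x ∈ s, ∃ y ∈ s, x ≠ y) ∧
    ∃ c r, (∀ x ∈ s, dist c x ≤ r) ∧ ∃ z ∈ s, β * r ≤ dist (F s) z

lemma flip_splitRule {V : Type*} (F : Multiset V → V) (j k : ℕ) :
    flip (splitRule F j k) = splitRule F k j := by
  ext x y
  exact congrArg F (add_comm _ _)

namespace IsAnonymousRule

section MetricSpace

variable {V : Type*} [MetricSpace V] {N : ℕ} {F : Multiset V → V}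

lemma truthful_replicate (H : IsAnonymousRule N F) (x x' : V) {j : ℕ} {s : Multiset V}
    (hs : j + card s = N) : dist (F (replicate j x + s)) x ≤ dist (F (replicate j x' + s)) x := by
  induction j generalizing s with
  | zero => simp
  | succ j ih =>
    calc dist (F (replicate (j + 1) x + s)) x
        = dist (F (x ::ₘ (replicate j x + s))) x := by
          rw [Multiset.replicate_succ, Multiset.cons_add]
      _ ≤ dist (F (x' ::ₘ (replicate j x + s))) x :=
          H.truthful _ _ _ (by rw [Multiset.card_add, Multiset.card_replicate]; lia)
      _ = dist (F (replicate j x + x' ::ₘ s)) x := by rw [Multiset.add_cons]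
      _ ≤ dist (F (replicate j x' + x' ::ₘ s)) x := ih (by rw [Multiset.card_cons]; lia)
      _ = dist (F (replicate (j + 1) x' + s)) x := by
          rw [Multiset.replicate_succ, Multiset.cons_add, Multiset.add_cons]

lemma apply_add_replicate_of_eq (H : IsAnonymousRule N F) {s t : Multiset V} {u : V} {k : ℕ}
    (hst : card s + k = N) (ht : card t = k) (hu : F (s + t) = u) : F (s + replicate k u) = u := by
  induction t using Multiset.induction generalizing s k with
  | empty => simpa [← ht] using hu
  | cons a t ih =>
    obtain rfl : card t + 1 = k := by rw [← ht, Multiset.card_cons]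
    have hrest : F (a ::ₘ (s + replicate (card t) u)) = u := by
      rw [← Multiset.cons_add]
      exact ih (by rw [Multiset.card_cons]; lia) rfl
        (by rw [Multiset.cons_add, ← Multiset.add_cons, hu])
    have hle := H.truthful u a (s + replicate (card t) u)
      (by rw [Multiset.card_add, Multiset.card_replicate]; lia)
    rwa [hrest, dist_self, dist_le_zero, ← Multiset.add_cons, ← Multiset.replicate_succ] at hle

lemma isTwoAgentRule_splitRule (H : IsAnonymousRule N F) {j k : ℕ} (hjk : j + k = N) :
    IsTwoAgentRule (splitRule F j k) where
  truthful_left x x' y := H.truthful_replicate x x' (by rwa [Multiset.card_replicate])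
  truthful_right x y y' := by
    simp only [splitRule, add_comm (replicate j x)]
    exact H.truthful_replicate y y' (by rwa [Multiset.card_replicate, add_comm])
  unanimous x := by rw [splitRule, ← Multiset.replicate_add, hjk, H.unanimous]

end MetricSpace

section NormedAddCommGroup

variable {V : Type*} [NormedAddCommGroup V] {N : ℕ} {F : Multiset V → V}

lemma sub_mem_normalCone_splitRule (H : IsAnonymousRule N F) {i k : ℕ} {x v : V} {s : Multiset V}
    (hik : i + k = N) (hs : card s = k) (hv : F (replicate i x + s) = v) :
    x - v ∈ normalCone (splitRule F i k) v :=
  sub_mem_normalCone_iff.mpr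
    (H.apply_add_replicate_of_eq (by rwa [Multiset.card_replicate]) hs hv)

lemma normalCone_splitRule_subset (H : IsAnonymousRule N F) {i j k l : ℕ} (hij : i ≤ j)
    (hjk : j + k = N) (hil : i + l = N) (v : V) :
    normalCone (splitRule F j k) v ⊆ normalCone (splitRule F i l) v := by
  intro d (hd : F (replicate j (v + d) + replicate k v) = v)
  rw [← Nat.add_sub_cancel' hij, Multiset.replicate_add, add_assoc] at hd
  have := H.sub_mem_normalCone_splitRule hil (by simp; lia) hd
  rwa [add_sub_cancel_left] at this

end NormedAddCommGroup

section InnerProductSpace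

variable {V : Type*} [NormedAddCommGroup V] [InnerProductSpace ℝ V] {N i j l : ℕ}
  {F : Multiset V → V} {a b c : V}

lemma robustnessFails_of_orthonormalPair (H : IsAnonymousRule N F) (hN : i + (j + l) = N)
    (hi : i ≠ 0) (hj : j ≠ 0) (hl : l ≠ 0) (o : OrthonormalPair a b) {W : Set V} (hW : IsOpen W)
    (hne : W.Nonempty) (ha : ∀ v ∈ W, ∀ k ∈ normalCone (splitRule F i (j + l)) v, 0 ≤ ⟪k, a⟫)
    (hb : ∀ v ∈ W, ∀ k ∈ normalCone (splitRule F j (i + l)) v, 0 ≤ ⟪k, b⟫) :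
    RobustnessFails N F (1 + √2) := by
  obtain ⟨c, hc⟩ := hne
  obtain ⟨ρ, hρ, hball⟩ := Metric.isOpen_iff.mp hW c hc
  obtain ⟨r, hr, rfl⟩ : ∃ r > 0, ρ = 4 * r := ⟨ρ / 4, by positivity, by ring⟩
  set z := c + (r / √2) • (a + b)
  set s := replicate i (c - r • a) + (replicate j (c - r • b) + replicate l z)
  have hmem {x : V} : x ∈ s ↔ x = c - r • a ∨ x = c - r • b ∨ x = z := by
    simp [s, Multiset.mem_replicate, hi, hj, hl]
  have hdist {d : V} (hd : ‖d‖ = 1) : dist c (c - r • d) = r := by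
    rw [dist_self_sub_right, norm_smul, hd, Real.norm_of_nonneg hr.le, mul_one]
  refine ⟨s, by simp [s, hN], ⟨c - r • a, hmem.mpr (.inl rfl), c - r • b,
    hmem.mpr (.inr (.inl rfl)), fun hab => ?_⟩, c, r, ?_, z, hmem.mpr (.inr (.inr rfl)), ?_⟩
  · have hab : a = b := smul_right_injective V hr.ne' (sub_right_injective hab)
    exact zero_ne_one (by rw [← o.inner_eq_zero, hab, o.inner_self_right])
  · rintro x hx
    obtain rfl | rfl | rfl := hmem.mp hx
    exacts [(hdist o.norm_left).le, (hdist o.norm_right).le, (o.dist_add_smul_add c hr.le).le]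
  · refine o.mul_le_dist_add_smul_add hr.le fun hv => ⟨ha _ (hball hv) _ ?_, hb _ (hball hv) _ ?_⟩
    · exact H.sub_mem_normalCone_splitRule hN (by simp) rfl
    · exact H.sub_mem_normalCone_splitRule (s := replicate i (c - r • a) + replicate l z)
        (by lia) (by simp) (by rw [add_left_comm])

end InnerProductSpace

section Plane

variable {V : Type*} [NormedAddCommGroup V] [InnerProductSpace ℝ V] [Fact (Module.finrank ℝ V = 2)]
  {N i j l m : ℕ} {F : Multiset V → V} {a b c e n : V}

lemma dist_apply_le_of_splitRule_eq (H : IsAnonymousRule N F) (hN : i + (j + l) = N) {z : V}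
    (hz : splitRule F (i + j) l c z = c) (v k : V) :
    dist (F (replicate i v + (replicate j (v + k) + replicate l z))) c ≤
      3 * dist v c + 2 * ‖k‖ := by
  set u := F (replicate i v + (replicate j (v + k) + replicate l z)) with hu
  have hblocs : dist (splitRule F (i + j) l v z) c ≤ dist v c := by
    simpa only [hz] using
      (H.isTwoAgentRule_splitRule (j := i + j) (k := l) (by lia)).dist_left_le v c z
  have htruth : dist u (v + k) ≤ dist (splitRule F (i + j) l v z) (v + k) := by
    rw [hu, splitRule, Multiset.replicate_add, add_assoc, add_left_comm (replicate i v),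
      add_left_comm (replicate i v)]
    exact H.truthful_replicate _ _ (by simp; lia)
  have hk : dist (v + k) c ≤ dist v c + ‖k‖ := by
    simpa [add_comm] using dist_triangle (v + k) v c
  linarith [dist_triangle u (v + k) c, dist_triangle_right (splitRule F (i + j) l v z) (v + k) c]

lemma exists_apply_eq (H : IsAnonymousRule N F) (hN : i + (j + l) = N) {ρ η : ℝ} (hρ : 0 < ρ)
    (hη : 0 < η) (he : e ∈ normalCone (splitRule F l (i + j)) c)
    (hbound : ∀ v ∈ Metric.closedBall c ρ, ∀ k ∈ normalCone (splitRule F i (j + l)) v,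
      η * ‖k‖ ≤ ⟪k, e⟫) :
    ∃ z, ∀ v ∈ Metric.ball c (ρ / 5), ∀ k ∈ normalCone (splitRule F j (i + l)) v, ‖k‖ ≤ ρ / 5 →
      F (replicate i v + (replicate j (v + k) + replicate l z)) = v := by
  set z := c + (ρ / η) • e
  refine ⟨z, fun v (hv : dist v c < ρ / 5) k (hk : F (replicate j (v + k) + _) = v) hkρ => ?_⟩
  set u := F (replicate i v + (replicate j (v + k) + replicate l z)) with hu
  have hz : splitRule F (i + j) l c z = c := by
    rw [← flip_splitRule]
    exact (H.isTwoAgentRule_splitRule (by lia)).smul_mem_normalCone he (by positivity)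
  have huc : dist u c ≤ ρ := by linarith [H.dist_apply_le_of_splitRule_eq hN hz v k]
  have hvu : η * ‖v - u‖ ≤ ⟪v - u, e⟫ :=
    hbound u huc _ (H.sub_mem_normalCone_splitRule hN (by simp) hu.symm)
  have hperm (w : V) : replicate i v + (replicate j (v + k) + replicate l w) =
      replicate l w + (replicate i v + replicate j (v + k)) := by rw [← add_assoc, add_comm]
  have hback : F (replicate i v + (replicate j (v + k) + replicate l v)) = v := by
    rwa [add_left_comm, ← Multiset.replicate_add]
  have htruth := H.truthful_replicate z v (j := l) (s := replicate i v + replicate j (v + k))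
    (by simp; lia)
  rw [← hperm, ← hperm, ← hu, hback] at htruth
  exact eq_of_dist_add_smul_le hη (by linarith) hvu htruth

lemma acuteOn_of_apply_eq (H : IsAnonymousRule N F) {s : Multiset V} (hN : i + (i + card s) = N)
    {h : V → V → V} (Hh : IsTwoAgentRule h) {σ : ℝ} (hσ : 0 < σ)
    (hstay : ∀ v ∈ Metric.ball c σ, ∀ k ∈ normalCone h v, ‖k‖ ≤ σ →
      F (replicate i v + (replicate i (v + k) + s)) = v) :
    AcuteOn h (Metric.ball c σ) := by
  intro v hv k hk b hb
  set r := σ / (‖k‖ + 1) with hr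
  have hr₀ : 0 < r := by positivity
  have hrk : ‖r • k‖ ≤ σ := by
    rw [norm_smul, Real.norm_of_nonneg hr₀.le, hr, div_mul_eq_mul_div, div_le_iff₀ (by positivity)]
    nlinarith
  suffices hinner : ⟪r • k, -b⟫ ≤ 0 by
    rw [inner_neg_right, real_inner_smul_left, Left.neg_nonpos_iff] at hinner
    exact nonneg_of_mul_nonneg_right hinner hr₀
  refine inner_nonpos_of_eventually_norm_le ?_
  have hsmall : ∀ᶠ t : ℝ in 𝓝[>] 0, ‖t • b‖ < σ :=
    nhdsWithin_le_nhds <| ContinuousAt.eventually_lt (by fun_prop) (by fun_prop) (by simpa)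
  filter_upwards [self_mem_nhdsWithin, nhdsWithin_le_nhds (Iio_mem_nhds one_pos), hsmall,
    (tendsto_sub_smul v b).eventually (Metric.isOpen_ball.mem_nhds hv)]
    with t (ht₀ : 0 < t) (ht₁ : t < 1) htσ htv
  have hbt : b ∈ normalCone h (v - t • b) := by
    have := Hh.mem_normalCone_add_smul hb (sub_nonneg.mpr ht₁.le)
    rwa [sub_smul, one_smul, sub_add_sub_cancel] at this
  have hstay_v := hstay v hv _ (Hh.smul_mem_normalCone hk hr₀.le) hrk
  have hstay_t := hstay _ htv _ (Hh.smul_mem_normalCone hbt ht₀.le) htσ.le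
  have htruth := H.truthful_replicate (v + r • k) (v - t • b) (j := i) (s := replicate i v + s)
    (by simpa)
  rw [sub_add_cancel] at hstay_t
  rw [hstay_t, add_left_comm, hstay_v, dist_self_add_right, dist_eq_norm, ← norm_neg (_ - _)]
    at htruth
  have hdiff : -(v - t • b - (v + r • k)) = r • k - t • (-b) := by module
  rwa [hdiff] at htruth

lemma robustnessFails_of_mem_normalCone (H : IsAnonymousRule N F) (hN : i + (j + l) = N)
    (hi : i ≠ 0) (hj : j ≠ 0) (hl : l ≠ 0) (o : OrthonormalPair a b) {U : Set V} (hU : IsOpen U)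
    (hne : U.Nonempty) (ha : ∀ v ∈ U, a ∈ normalCone (splitRule F (j + l) i) v)
    (hb : ∀ v ∈ U, b ∈ normalCone (splitRule F (i + l) j) v) : RobustnessFails N F (1 + √2) := by
  refine H.robustnessFails_of_orthonormalPair hN hi hj hl o hU hne
    (fun v hv k hk => ?_) fun v hv k hk => ?_
  · refine (H.isTwoAgentRule_splitRule (by lia)).inner_nonneg_of_eventually_mem_normalCone
      (eventually_of_mem (hU.mem_nhds hv) ha) ?_
    rwa [flip_splitRule]
  · refine (H.isTwoAgentRule_splitRule (by lia)).inner_nonneg_of_eventually_mem_normalCone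
      (eventually_of_mem (hU.mem_nhds hv) hb) ?_
    rwa [flip_splitRule]

lemma exists_acuteOn (H : IsAnonymousRule (2 * m + 1) F) (hm : m ≠ 0) (o : OrthonormalPair e n)
    {U : Set V} (hU : IsOpen U) (hc : c ∈ U)
    (he : ∀ v ∈ U, e ∈ normalCone (splitRule F (2 * m) 1) v)
    (hn : ∀ v ∈ U, n ∉ normalCone (splitRule F m (m + 1)) v)
    (hn' : ∀ v ∈ U, -n ∉ normalCone (splitRule F m (m + 1)) v) :
    ∃ W ⊆ U, IsOpen W ∧ W.Nonempty ∧ AcuteOn (splitRule F m (m + 1)) W := by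
  have : FiniteDimensional ℝ V := .of_fact_finrank_eq_two
  have : ProperSpace V := FiniteDimensional.proper ℝ V
  have Hm := H.isTwoAgentRule_splitRule (j := m) (k := m + 1) (by lia)
  obtain ⟨ρ, hρ, hball⟩ := Metric.nhds_basis_closedBall.mem_iff.mp (hU.mem_nhds hc)
  obtain ⟨η, hη, hbound⟩ := Hm.exists_mul_norm_le_inner (e := e) (isCompact_closedBall c ρ)
    fun v hv k hk hk₀ => by
      refine Hm.inner_pos_of_mem_normalCone o hk hk₀ (hn v (hball hv)) (hn' v (hball hv)) ?_
      refine (H.isTwoAgentRule_splitRule (j := 2 * m) (k := 1)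
        rfl).inner_nonneg_of_eventually_mem_normalCone
          (eventually_of_mem (hU.mem_nhds (hball hv)) he) ?_
      rw [flip_splitRule]
      exact H.normalCone_splitRule_subset (by lia) (by lia) (by lia) v hk
  obtain ⟨z, hz⟩ := H.exists_apply_eq (i := m) (j := m) (l := 1) (by lia) hρ hη
    (H.normalCone_splitRule_subset (by lia) (by lia) (by lia) c (he c hc)) hbound
  exact ⟨Metric.ball c (ρ / 5),
    (Metric.ball_subset_closedBall.trans (Metric.closedBall_subset_closedBall (by linarith))).trans
      hball, Metric.isOpen_ball, Metric.nonempty_ball.mpr (by positivity),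
    H.acuteOn_of_apply_eq (by simp; lia) Hm (by positivity) hz⟩

lemma robustnessFails_of_notMem_normalCone (H : IsAnonymousRule (2 * m + 1) F) (hm : m ≠ 0)
    (o : OrthonormalPair e n) {U : Set V} (hU : IsOpen U) (hne : U.Nonempty)
    (he : ∀ v ∈ U, e ∈ normalCone (splitRule F (2 * m) 1) v)
    (hn : ∀ v ∈ U, n ∉ normalCone (splitRule F m (m + 1)) v)
    (hn' : ∀ v ∈ U, -n ∉ normalCone (splitRule F m (m + 1)) v) :
    RobustnessFails (2 * m + 1) F (1 + √2) := by
  obtain ⟨c, hc⟩ := hne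
  obtain ⟨W, hWU, hW, hW₀, hacute⟩ := H.exists_acuteOn hm o hU hc he hn hn'
  have hflip : flip (splitRule F (m + 1) m) = splitRule F m (m + 1) := flip_splitRule F _ _
  obtain ⟨a, b, oab, W', hW', hW'₀, hab⟩ :=
    (H.isTwoAgentRule_splitRule (j := m + 1) (k := m)
      (by lia)).exists_orthonormalPair_inner_nonneg o hW hW₀ (hflip ▸ hacute)
      (fun v => hflip ▸ H.normalCone_splitRule_subset (by lia) (by lia) (by lia) v)
      (fun v hv => H.normalCone_splitRule_subset (by lia) (by lia) (by lia) v (he v (hWU hv)))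
      (fun v hv => hflip ▸ hn v (hWU hv)) fun v hv => hflip ▸ hn' v (hWU hv)
  rw [hflip] at hab
  exact H.robustnessFails_of_orthonormalPair (i := m) (j := m) (l := 1) (by lia) hm hm one_ne_zero
    oab hW' hW'₀ (fun v hv k hk => (hab v hv k hk).1) fun v hv k hk => (hab v hv k hk).2

lemma robustnessFails_of_forall_mem_normalCone (H : IsAnonymousRule (2 * m + 1) F) (hm : 2 ≤ m)
    (o : OrthonormalPair e n) {U : Set V} (hU : IsOpen U) (hne : U.Nonempty)
    (he : ∀ v ∈ U, e ∈ normalCone (splitRule F (2 * m) 1) v) :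
    RobustnessFails (2 * m + 1) F (1 + √2) := by
  have Hm := H.isTwoAgentRule_splitRule (j := m) (k := m + 1) (by lia)
  have hmajority {W : Set V} (hW : IsOpen W) (hWU : W ⊆ U) (hW₀ : W.Nonempty) {n : V}
      (o : OrthonormalPair e n) (hn : ∀ v ∈ W, n ∈ normalCone (splitRule F m (m + 1)) v) :
      RobustnessFails (2 * m + 1) F (1 + √2) := by
    refine H.robustnessFails_of_mem_normalCone (i := m + 1) (j := 1) (l := m - 1) (by lia)
      (by lia) one_ne_zero (by lia) o.symm hW hW₀ ?_ ?_
    · rwa [show 1 + (m - 1) = m by lia]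
    · rw [show m + 1 + (m - 1) = 2 * m by lia]
      exact fun v hv => he v (hWU hv)
  by_cases hn : ∀ v ∈ U, n ∈ normalCone (splitRule F m (m + 1)) v
  · exact hmajority hU subset_rfl hne o hn
  set W := U ∩ {v | n ∉ normalCone (splitRule F m (m + 1)) v}
  have hW : IsOpen W := hU.inter (Hm.isOpen_notMem_normalCone n)
  have hW₀ : W.Nonempty := by push Not at hn; exact hn
  by_cases hn' : ∀ v ∈ W, -n ∈ normalCone (splitRule F m (m + 1)) v
  · exact hmajority hW Set.inter_subset_left hW₀ o.neg_right hn'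
  push Not at hn'
  exact H.robustnessFails_of_notMem_normalCone (by lia) o
    (hW.inter (Hm.isOpen_notMem_normalCone (-n))) hn' (fun v hv => he v hv.1.1)
    (fun v hv => hv.1.2) fun v hv => hv.2

theorem robustnessFails_of_apply_ne (H : IsAnonymousRule (2 * m + 1) F) (hm : 2 ≤ m) {x y : V}
    (hne : F (replicate (2 * m) x + {y}) ≠ x) : RobustnessFails (2 * m + 1) F (1 + √2) := by
  set w := F (replicate (2 * m) x + {y}) with hw
  have hxw : x - w ≠ 0 := sub_ne_zero.mpr hne.symm
  have hcone : x - w ∈ normalCone (splitRule F (2 * m) 1) w :=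
    H.sub_mem_normalCone_splitRule rfl (by simp) hw.symm
  have Hm := H.isTwoAgentRule_splitRule (j := 2 * m) (k := 1) rfl
  obtain ⟨U, hUcone, hU, hwU⟩ :=
    eventually_nhds_iff.mp (Hm.eventually_mem_normalCone hxw hcone one_pos)
  obtain ⟨n, o⟩ := exists_orthonormalPair hxw
  exact H.robustnessFails_of_forall_mem_normalCone hm o hU ⟨_, hwU⟩ fun v hv =>
    Hm.smul_mem_normalCone (hUcone v hv) (by positivity)

end Plane

end IsAnonymousRule

section Profile

variable {ι V : Type*} [Fintype ι]

lemma exists_perm_of_map_univ_eq {x y : ι → V}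
    (hxy : Finset.univ.val.map x = Finset.univ.val.map y) : ∃ σ : Equiv.Perm ι, y ∘ σ = x := by
  classical
  have hfiber (v : V) : Fintype.card {i // x i = v} = Fintype.card {i // y i = v} := by
    have := congrArg (Multiset.count v) hxy
    simpa only [Multiset.count_map, Fintype.card_subtype, eq_comm, Finset.card_def,
      Finset.filter_val] using this
  let σ := Equiv.ofFiberEquiv fun v => Fintype.equivOfCardEq (hfiber v)
  exact ⟨σ, funext fun i => Equiv.ofFiberEquiv_map _ i⟩

lemma exists_map_univ_eq {s : Multiset V} (hs : card s = Fintype.card ι) :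
    ∃ x : ι → V, Finset.univ.val.map x = s := by
  classical
  let σ : ι ≃ s := Fintype.equivOfCardEq (by rw [Multiset.card_coe, hs])
  refine ⟨(fun v : s => (v : V)) ∘ σ, ?_⟩
  rw [← Multiset.map_map, Multiset.map_univ_val_equiv, Multiset.map_univ_coe]

lemma map_update_univ [DecidableEq ι] (x : ι → V) (i : ι) (v : V) :
    Finset.univ.val.map (Function.update x i v) = v ::ₘ (Finset.univ.erase i).val.map x := by
  rw [← Finset.insert_erase (Finset.mem_univ i), Finset.insert_val_of_notMem (by simp),
    Multiset.map_cons, Function.update_self, Finset.erase_insert (by simp)]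
  congr 1
  exact Multiset.map_congr rfl fun k hk =>
    Function.update_of_ne (Finset.ne_of_mem_erase (Finset.mem_def.mpr hk)) _ _

lemma exists_isAnonymousRule [DecidableEq ι] [MetricSpace V] [Nonempty V] {f : (ι → V) → V}
    (htruth : ∀ x i v, dist (f x) (x i) ≤ dist (f (Function.update x i v)) (x i))
    (hanon : ∀ (x : ι → V) (σ : Equiv.Perm ι), f (x ∘ σ) = f x)
    (hunan : ∀ v, f (fun _ => v) = v) :
    ∃ F, IsAnonymousRule (Fintype.card ι) F ∧ ∀ x, F (Finset.univ.val.map x) = f x := by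
  have hfactor : f.FactorsThrough fun x => Finset.univ.val.map x := fun x y hxy => by
    obtain ⟨σ, rfl⟩ := exists_perm_of_map_univ_eq hxy
    exact hanon y σ
  set F := Function.extend (fun x : ι → V => Finset.univ.val.map x) f
    fun _ => Classical.arbitrary V
  have hF (x : ι → V) : F (Finset.univ.val.map x) = f x := hfactor.extend_apply _ x
  refine ⟨F, ⟨fun a a' s hs => ?_, fun v => ?_⟩, hF⟩
  · obtain ⟨x, hx⟩ : ∃ x : ι → V, Finset.univ.val.map x = a ::ₘ s :=
      exists_map_univ_eq (by rw [Multiset.card_cons, hs])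
    obtain ⟨i, -, rfl⟩ := Multiset.mem_map.mp (hx ▸ Multiset.mem_cons_self a s)
    have hrest : (Finset.univ.erase i).val.map x = s := by
      rw [← Multiset.cons_inj_right (x i), ← map_update_univ, Function.update_eq_self, hx]
    rw [← hx, hF, ← hrest, ← map_update_univ, hF]
    exact htruth x i a'
  · have := hF fun _ => v
    rwa [Multiset.map_const', Finset.card_val, Finset.card_univ, hunan] at this

end Profile

section Cost

variable {ι V : Type*} [MetricSpace V]

/-- The egalitarian social cost of the outcome `y` on the profile `x`. -/
noncomputable def socialCost (x : ι → V) (y : V) : ℝ := ⨆ i, dist y (x i)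

/-- The optimal egalitarian social cost on the profile `x`; in a Euclidean plane this is the radius
of the minimum enclosing circle. -/
noncomputable def optCost (x : ι → V) : ℝ := ⨅ y, socialCost x y

lemma optCost_le [Nonempty ι] {x : ι → V} {c : V} {r : ℝ} (h : ∀ i, dist c (x i) ≤ r) :
    optCost x ≤ r := by
  refine (ciInf_le ⟨0, ?_⟩ c).trans (ciSup_le h)
  rintro _ ⟨y, rfl⟩
  exact Real.iSup_nonneg fun i => dist_nonneg

variable [Finite ι]

lemma dist_le_socialCost (x : ι → V) (y : V) (i : ι) : dist y (x i) ≤ socialCost x y :=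
  le_ciSup (f := fun i => dist y (x i)) (Set.finite_range _).bddAbove i

lemma optCost_pos {x : ι → V} {i j : ι} (hij : x i ≠ x j) : 0 < optCost x := by
  have : Nonempty V := ⟨x i⟩
  refine (half_pos (dist_pos.mpr hij)).trans_le (le_ciInf fun y => ?_)
  linarith [dist_le_socialCost x y i, dist_le_socialCost x y j, dist_triangle_left (x i) (x j) y]

end Cost

lemma two_mul_optCost_update_le {ι V : Type*} [Finite ι] [DecidableEq ι] [NormedAddCommGroup V]
    [NormedSpace ℝ V] (a b : V) (i : ι) :
    2 * optCost (Function.update (fun _ => a) i b) ≤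
      socialCost (Function.update (fun _ => a) i b) a := by
  have : Nonempty ι := ⟨i⟩
  have hopt : optCost (Function.update (fun _ => a) i b) ≤ dist a b / 2 := by
    refine optCost_le (c := midpoint ℝ a b) fun j => ?_
    obtain rfl | hj := eq_or_ne j i
    · simp [div_eq_inv_mul]
    · simp [hj, div_eq_inv_mul]
  have hcost := dist_le_socialCost (Function.update (fun _ => a) i b) a i
  rw [Function.update_self] at hcost
  linarith

lemma RobustnessFails.exists_profile {ι V : Type*} [Fintype ι] [MetricSpace V]
    {F : Multiset V → V} {β : ℝ} (hβ : 0 ≤ β) (h : RobustnessFails (Fintype.card ι) F β) :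
    ∃ x : ι → V, 0 < optCost x ∧ β * optCost x ≤ socialCost x (F (Finset.univ.val.map x)) := by
  obtain ⟨s, hs, ⟨y, hy, y', hy', hne⟩, c, r, hr, z, hz, hzr⟩ := h
  obtain ⟨x, rfl⟩ := exists_map_univ_eq hs
  obtain ⟨i, -, rfl⟩ := Multiset.mem_map.mp hy
  obtain ⟨j, -, rfl⟩ := Multiset.mem_map.mp hy'
  obtain ⟨k, -, rfl⟩ := Multiset.mem_map.mp hz
  have : Nonempty ι := ⟨k⟩
  refine ⟨x, optCost_pos hne, ?_⟩
  calc β * optCost x ≤ β * r := by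
        gcongr
        exact optCost_le fun i => hr _ (Multiset.mem_map_of_mem x (Finset.mem_univ_val i))
    _ ≤ dist (F (Finset.univ.val.map x)) (x k) := hzr
    _ ≤ _ := dist_le_socialCost x _ k

theorem stmt11_general {ι V : Type*} [Fintype ι] [DecidableEq ι] [NormedAddCommGroup V]
    [InnerProductSpace ℝ V] [Fact (Module.finrank ℝ V = 2)] (hodd : Odd (Fintype.card ι))
    (hcard : 5 ≤ Fintype.card ι) (f : (ι → V) → (ι → V) → V)
    (htruth : ∀ p x i v, dist (f x p) (x i) ≤ dist (f (Function.update x i v) p) (x i))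
    (hanon : ∀ p x (σ : Equiv.Perm ι), f (x ∘ σ) p = f x p)
    (hunan : ∀ p v, f (fun _ => v) p = v) :
    (∃ x, 0 < optCost x ∧ 2 * optCost x ≤ socialCost x (f x x)) ∨
      ∃ x p, 0 < optCost x ∧ (1 + √2) * optCost x ≤ socialCost x (f x p) := by
  obtain ⟨m, hm⟩ := hodd
  have : Nontrivial V := Module.nontrivial_of_finrank_pos (R := ℝ)
    (by rw [Fact.out (p := Module.finrank ℝ V = 2)]; exact two_pos)
  obtain ⟨i, j, hij⟩ := Fintype.exists_pair_of_one_lt_card (α := ι) (by lia)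
  obtain ⟨a, b, hab⟩ := exists_pair_ne V
  set q : ι → V := Function.update (fun _ => a) i b with hq
  by_cases hfq : f q q = a
  · refine .inl ⟨q, optCost_pos (i := j) (j := i) (by simpa [hq, hij.symm]), ?_⟩
    rw [hfq]
    exact two_mul_optCost_update_le a b i
  · obtain ⟨F, H, hF⟩ := exists_isAnonymousRule (htruth q) (hanon q) (hunan q)
    have hne : F (replicate (2 * m) a + {b}) ≠ a := by
      rw [← hF, hq, map_update_univ] at hfq
      rw [add_comm, Multiset.singleton_add]
      simpa [hm] using hfq
    have hfail := (hm ▸ H).robustnessFails_of_apply_ne (by lia) hne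
    obtain ⟨x, hpos, hle⟩ := RobustnessFails.exists_profile (ι := ι) (by positivity) (hm ▸ hfail)
    exact .inr ⟨x, q, hpos, hF x ▸ hle⟩

/-- no deterministic learning-augmented mechanism for five agents in the
Euclidean plane, augmented with a prediction of all five agents' locations, that is
truthful, anonymous, and unanimous for every fixed prediction, can be both better than
2-consistent and better than `(1+√2)`-robust. Here
`opt x = ⨅ y, ⨆ i, dist y (x i)` is the radius of the minimum enclosing circle and the
egalitarian social cost of output `y` is `⨆ i, dist y (x i)`. -/
theorem stmt11
    (f : (Fin 5 → EuclideanSpace ℝ (Fin 2)) → (Fin 5 → EuclideanSpace ℝ (Fin 2)) →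
      EuclideanSpace ℝ (Fin 2))
    (htruth : ∀ (p x : Fin 5 → EuclideanSpace ℝ (Fin 2)) (i : Fin 5)
        (x' : EuclideanSpace ℝ (Fin 2)),
      dist (f x p) (x i) ≤ dist (f (Function.update x i x') p) (x i))
    (hanon : ∀ (p x : Fin 5 → EuclideanSpace ℝ (Fin 2)) (σ : Equiv.Perm (Fin 5)),
      f (x ∘ σ) p = f x p)
    (hunan : ∀ (p : Fin 5 → EuclideanSpace ℝ (Fin 2)) (z : EuclideanSpace ℝ (Fin 2)),
      f (fun _ => z) p = z) :
    (∃ x : Fin 5 → EuclideanSpace ℝ (Fin 2),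
      0 < (⨅ y : EuclideanSpace ℝ (Fin 2), ⨆ i, dist y (x i)) ∧
      2 * (⨅ y : EuclideanSpace ℝ (Fin 2), ⨆ i, dist y (x i))
        ≤ ⨆ i, dist (f x x) (x i)) ∨
    (∃ x p : Fin 5 → EuclideanSpace ℝ (Fin 2),
      0 < (⨅ y : EuclideanSpace ℝ (Fin 2), ⨆ i, dist y (x i)) ∧
      (1 + Real.sqrt 2) * (⨅ y : EuclideanSpace ℝ (Fin 2), ⨆ i, dist y (x i))
        ≤ ⨆ i, dist (f x p) (x i)) := by
  have : Fact (Module.finrank ℝ (EuclideanSpace ℝ (Fin 2)) = 2) := ⟨finrank_euclideanSpace_fin⟩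
  exact stmt11_general (by decide) (by decide) f htruth hanon hunan
end
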